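/- arXiv:0911.2785 — 8 statements merged into one kernel-verified Lean document; each statement's English description precedes it below -/
import Mathlib

section
/- Let G = (N, E) be a finite directed graph and let P₁(G) be the ground normal logic program consisting of the facts node(x) for x ∈ N and edge(x,y) for (x,y) ∈ E, together with all ground instances over N of the rules: v(X) ← node(X), ¬nv(X); nv(X) ← node(X), ¬v(X); c ← edge(X,Y), ¬v(X), ¬v(Y), ¬c. Then an interpretation M is a stable model of P₁(G) if and only if there exists a vertex cover V of G (a set V ⊆ N such that every edge of G has at least one endpoint in V) with M = {node(x) : x ∈ N} ∪ {edge(x,y) : (x,y) ∈ E} ∪ {v(x) : x ∈ V} ∪ {nv(x) : x ∈ N∖V}; in particular c ∉ M for every stable model M. -/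
/-- A ground normal logic program rule: head atom, positive body atoms, negated body atoms. -/
structure Rule (α : Type*) where
  head : α
  pos : Set α
  neg : Set α

/-- A fact is a rule with empty body. -/
def Rule.fact {α : Type*} (a : α) : Rule α := ⟨a, ∅, ∅⟩

/-- `I` is closed under the Gelfond–Lifschitz reduct `P^M`: for every rule of `P` whose
negated body atoms are all outside `M`, if the positive body is contained in `I` then
so is the head. -/
def ClosedUnderReduct {α : Type*} (P : Set (Rule α)) (M I : Set α) : Prop :=
  ∀ r ∈ P, (∀ c ∈ r.neg, c ∉ M) → r.pos ⊆ I → r.head ∈ I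

/-- Least model of the reduct `P^M`: the least set of atoms closed under its rules. -/
def LeastReductModel {α : Type*} (P : Set (Rule α)) (M : Set α) : Set α :=
  ⋂₀ {I | ClosedUnderReduct P M I}

/-- `M` is a stable model of `P` if it equals the least model of the reduct `P^M`. -/
def IsStableModel {α : Type*} (P : Set (Rule α)) (M : Set α) : Prop :=
  M = LeastReductModel P M

/-- Atoms of the vertex-cover program. -/
inductive VCAtom (V : Type*) where
  | node : V → VCAtom V
  | edge : V → V → VCAtom V
  | v : V → VCAtom V
  | nv : V → VCAtom V
  | c : VCAtom V

/-- The ground program `P₁(G)` of the vertex-cover query. -/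
def vcProgram {V : Type*} (N : Finset V) (E : Finset (V × V)) : Set (Rule (VCAtom V)) :=
  {r | ∃ x ∈ N, r = Rule.fact (VCAtom.node x)} ∪
  {r | ∃ e ∈ E, r = Rule.fact (VCAtom.edge e.1 e.2)} ∪
  {r | ∃ x ∈ N, r = ⟨VCAtom.v x, {VCAtom.node x}, {VCAtom.nv x}⟩} ∪
  {r | ∃ x ∈ N, r = ⟨VCAtom.nv x, {VCAtom.node x}, {VCAtom.v x}⟩} ∪
  {r | ∃ x ∈ N, ∃ y ∈ N,
      r = ⟨VCAtom.c, {VCAtom.edge x y}, {VCAtom.v x, VCAtom.v y, VCAtom.c}⟩}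

/-- Explicit description of the least model of the reduct `P₁(G)^M`. -/
def vcReductModel {V : Type*} (N : Finset V) (E : Finset (V × V)) (M : Set (VCAtom V)) :
    Set (VCAtom V)
  | .node x => x ∈ N
  | .edge x y => (x, y) ∈ E
  | .v x => x ∈ N ∧ VCAtom.nv x ∉ M
  | .nv x => x ∈ N ∧ VCAtom.v x ∉ M
  | .c => ∃ e ∈ E, VCAtom.v e.1 ∉ M ∧ VCAtom.v e.2 ∉ M ∧ VCAtom.c ∉ M

section vcReductModel

variable {V : Type*} {N : Finset V} {E : Finset (V × V)} {M : Set (VCAtom V)}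

theorem node_mem_vcReductModel {x : V} : VCAtom.node x ∈ vcReductModel N E M ↔ x ∈ N := Iff.rfl

theorem edge_mem_vcReductModel {x y : V} :
    VCAtom.edge x y ∈ vcReductModel N E M ↔ (x, y) ∈ E := Iff.rfl

theorem v_mem_vcReductModel {x : V} :
    VCAtom.v x ∈ vcReductModel N E M ↔ x ∈ N ∧ VCAtom.nv x ∉ M := Iff.rfl

theorem nv_mem_vcReductModel {x : V} :
    VCAtom.nv x ∈ vcReductModel N E M ↔ x ∈ N ∧ VCAtom.v x ∉ M := Iff.rfl

theorem c_mem_vcReductModel :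
    VCAtom.c ∈ vcReductModel N E M ↔
      ∃ e ∈ E, VCAtom.v e.1 ∉ M ∧ VCAtom.v e.2 ∉ M ∧ VCAtom.c ∉ M := Iff.rfl

theorem closedUnderReduct_vcReductModel :
    ClosedUnderReduct (vcProgram N E) M (vcReductModel N E M) := by
  rintro r ((((⟨x, hx, rfl⟩ | ⟨e, he, rfl⟩) | ⟨x, hx, rfl⟩) | ⟨x, hx, rfl⟩) |
    ⟨x, hx, y, hy, rfl⟩) hneg hpos
  · exact hx
  · exact he
  · exact ⟨hx, hneg _ rfl⟩
  · exact ⟨hx, hneg _ rfl⟩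
  · exact ⟨(x, y), hpos rfl, hneg _ (by simp), hneg _ (by simp), hneg _ (by simp)⟩

theorem vcReductModel_subset_of_closedUnderReduct (hE : ∀ e ∈ E, e.1 ∈ N ∧ e.2 ∈ N)
    {I : Set (VCAtom V)} (hI : ClosedUnderReduct (vcProgram N E) M I) :
    vcReductModel N E M ⊆ I := by
  have hnode : ∀ x ∈ N, VCAtom.node x ∈ I := fun x hx =>
    hI (Rule.fact (.node x)) (.inl <| .inl <| .inl <| .inl ⟨x, hx, rfl⟩)
      (by simp [Rule.fact]) (by simp [Rule.fact])
  have hedge : ∀ e ∈ E, VCAtom.edge e.1 e.2 ∈ I := fun e he =>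
    hI (Rule.fact (.edge e.1 e.2)) (.inl <| .inl <| .inl <| .inr ⟨e, he, rfl⟩)
      (by simp [Rule.fact]) (by simp [Rule.fact])
  rintro (x | ⟨x, y⟩ | x | x | _) ha
  · exact hnode x ha
  · exact hedge (x, y) ha
  · exact hI ⟨.v x, {.node x}, {.nv x}⟩ (.inl <| .inl <| .inr ⟨x, ha.1, rfl⟩)
      (by simpa using ha.2) (by simpa using hnode x ha.1)
  · exact hI ⟨.nv x, {.node x}, {.v x}⟩ (.inl <| .inr ⟨x, ha.1, rfl⟩)
      (by simpa using ha.2) (by simpa using hnode x ha.1)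
  · obtain ⟨e, he, hc⟩ := ha
    exact hI ⟨.c, {.edge e.1 e.2}, {.v e.1, .v e.2, .c}⟩
      (.inr ⟨e.1, (hE e he).1, e.2, (hE e he).2, rfl⟩)
      (by simpa using hc) (by simpa using hedge e he)

theorem leastReductModel_vcProgram (hE : ∀ e ∈ E, e.1 ∈ N ∧ e.2 ∈ N) :
    LeastReductModel (vcProgram N E) M = vcReductModel N E M :=
  (Set.sInter_subset_of_mem closedUnderReduct_vcReductModel).antisymm
    (Set.subset_sInter fun _ hI => vcReductModel_subset_of_closedUnderReduct hE hI)

theorem isStableModel_vcProgram_iff (hE : ∀ e ∈ E, e.1 ∈ N ∧ e.2 ∈ N) :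
    IsStableModel (vcProgram N E) M ↔ M = vcReductModel N E M := by
  rw [IsStableModel, leastReductModel_vcProgram hE]

theorem c_notMem_of_eq_vcReductModel (h : M = vcReductModel N E M) : VCAtom.c ∉ M := by
  intro hc
  have hc' := hc
  rw [h, c_mem_vcReductModel] at hc'
  obtain ⟨e, -, -, -, hn⟩ := hc'
  exact hn hc

end vcReductModel

theorem stmt0 {V : Type*} (N : Finset V) (E : Finset (V × V))
    (hE : ∀ e ∈ E, e.1 ∈ N ∧ e.2 ∈ N) (M : Set (VCAtom V)) :
    (IsStableModel (vcProgram N E) M ↔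
      ∃ S : Finset V, S ⊆ N ∧ (∀ e ∈ E, e.1 ∈ S ∨ e.2 ∈ S) ∧
        M = (VCAtom.node '' ↑N) ∪ ((fun e : V × V => VCAtom.edge e.1 e.2) '' ↑E) ∪
            (VCAtom.v '' ↑S) ∪ (VCAtom.nv '' (↑N \ ↑S))) ∧
    (IsStableModel (vcProgram N E) M → VCAtom.c ∉ M) := by
  classical
  rw [isStableModel_vcProgram_iff hE]
  refine ⟨⟨fun h => ?_, ?_⟩, c_notMem_of_eq_vcReductModel⟩
  · have hc := c_notMem_of_eq_vcReductModel h
    have hnode (x : V) : VCAtom.node x ∈ M ↔ x ∈ N :=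
      (Set.ext_iff.1 h _).trans node_mem_vcReductModel
    have hedge (x y : V) : VCAtom.edge x y ∈ M ↔ (x, y) ∈ E :=
      (Set.ext_iff.1 h _).trans edge_mem_vcReductModel
    have hv (x : V) : VCAtom.v x ∈ M ↔ x ∈ N ∧ VCAtom.nv x ∉ M :=
      (Set.ext_iff.1 h _).trans v_mem_vcReductModel
    have hnv (x : V) : VCAtom.nv x ∈ M ↔ x ∈ N ∧ VCAtom.v x ∉ M :=
      (Set.ext_iff.1 h _).trans nv_mem_vcReductModel
    have hcover := (Set.ext_iff.1 h _).trans c_mem_vcReductModel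
    refine ⟨N.filter fun x => VCAtom.v x ∈ M, Finset.filter_subset _ _, fun e he => ?_, ?_⟩
    · have := hE e he
      simp only [Finset.mem_filter]
      by_contra hcon
      exact hc (hcover.2 ⟨e, he, by tauto, by tauto, hc⟩)
    · ext (x | ⟨x, y⟩ | x | x | _)
      · simp [hnode]
      · simp [hedge]
      · have := hv x
        simp
        tauto
      · have := hnv x
        simp
        tauto
      · simpa using hc
  · rintro ⟨S, hS, hcov, rfl⟩
    ext (x | ⟨x, y⟩ | x | x | _)
    · simp [node_mem_vcReductModel]
    · simp [edge_mem_vcReductModel]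
    · have := @hS x
      simp [v_mem_vcReductModel]
      tauto
    · simp [nv_mem_vcReductModel]
    · simp [c_mem_vcReductModel]
      intro x y hxy
      have := hcov _ hxy
      tauto
end

section
/- Let P be a ground normal logic program over a set of atoms not containing the atoms p₁,…,p_k (k ≥ 1), and let B be a conjunction of literals (positive and negated atoms) over the atoms of P. Let st(r) be the set of k rules pⱼ ← B, ¬p₁,…,¬p_{j−1}, ¬p_{j+1},…,¬p_k for j = 1,…,k (the standard translation of the exclusive disjunctive rule p₁ ⊕ ⋯ ⊕ p_k ← B). Then the stable models of P ∪ st(r) are exactly: (i) the sets M ∪ {pⱼ} where M is a stable model of P satisfying B and 1 ≤ j ≤ k, and (ii) the stable models M of P not satisfying B. In particular, in every stable model in which B holds, exactly one of p₁,…,p_k is true. -/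
theorem isStableModel_iff {α : Type*} {P : Set (Rule α)} {M : Set α} :
    IsStableModel P M ↔
      ClosedUnderReduct P M M ∧ ∀ I, ClosedUnderReduct P M I → M ⊆ I := by
  constructor
  · intro h
    have hmin : ∀ I, ClosedUnderReduct P M I → M ⊆ I := fun I hI a ha => by
      rw [h] at ha
      exact ha I hI
    refine ⟨fun r hr hneg hpos => ?_, hmin⟩
    rw [h]
    exact fun I hI => hI r hr hneg (hpos.trans (hmin I hI))
  · rintro ⟨hclosed, hmin⟩
    exact Set.Subset.antisymm (fun a ha I hI => hmin I hI ha) (fun a ha => ha M hclosed)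

theorem closedUnderReduct_union {α : Type*} {P Q : Set (Rule α)} {M I : Set α} :
    ClosedUnderReduct (P ∪ Q) M I ↔ ClosedUnderReduct P M I ∧ ClosedUnderReduct Q M I :=
  ⟨fun h => ⟨fun r hr => h r (Or.inl hr), fun r hr => h r (Or.inr hr)⟩,
    fun h r hr => hr.elim (h.1 r) (h.2 r)⟩

/-- Closure under the reduct of `P` only depends on the atoms occurring in `P`. -/
theorem ClosedUnderReduct.congr {α : Type*} {P : Set (Rule α)} {F M M' I I' : Set α}
    (hfresh : ∀ r ∈ P, ∀ a ∈ F, r.head ≠ a ∧ a ∉ r.pos ∧ a ∉ r.neg)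
    (hM : ∀ a ∉ F, a ∈ M ↔ a ∈ M') (hI : ∀ a ∉ F, a ∈ I ↔ a ∈ I')
    (h : ClosedUnderReduct P M I) : ClosedUnderReduct P M' I' := by
  intro r hr hneg hpos
  refine (hI _ fun hF => (hfresh r hr _ hF).1 rfl).1 (h r hr ?_ ?_)
  · exact fun c hc hcM => hneg c hc ((hM c fun hF => (hfresh r hr c hF).2.2 hc).1 hcM)
  · exact fun b hb => (hI b fun hF => (hfresh r hr b hF).2.1 hb).2 (hpos hb)

/-- A stable model contains no atom foreign to the program. -/
theorem IsStableModel.notMem_of_fresh {α : Type*} {P : Set (Rule α)} {F M : Set α}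
    (hfresh : ∀ r ∈ P, ∀ a ∈ F, r.head ≠ a ∧ a ∉ r.pos ∧ a ∉ r.neg)
    (h : IsStableModel P M) {a : α} (ha : a ∈ F) : a ∉ M := by
  obtain ⟨hclosed, hmin⟩ := isStableModel_iff.1 h
  have hdiff : ClosedUnderReduct P M (M \ F) :=
    hclosed.congr hfresh (fun _ _ => Iff.rfl) (fun b hb => by simp [hb])
  exact fun haM => (hmin _ hdiff haM).2 ha

/-- Adding rules whose heads lie in a set `F` of fresh atoms does not affect stable models
outside `F`. -/
theorem IsStableModel.diff_of_union {α : Type*} {P Q : Set (Rule α)} {F M : Set α}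
    (hfresh : ∀ r ∈ P, ∀ a ∈ F, r.head ≠ a ∧ a ∉ r.pos ∧ a ∉ r.neg)
    (hhead : ∀ r ∈ Q, r.head ∈ F) (h : IsStableModel (P ∪ Q) M) :
    IsStableModel P (M \ F) := by
  obtain ⟨hclosed, hmin⟩ := isStableModel_iff.1 h
  refine isStableModel_iff.2 ⟨?_, fun I hI a ha => ?_⟩
  · exact (closedUnderReduct_union.1 hclosed).1.congr hfresh
      (fun b hb => by simp [hb]) (fun b hb => by simp [hb])
  · have hI' : ClosedUnderReduct (P ∪ Q) M (I ∪ F) := closedUnderReduct_union.2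
      ⟨hI.congr hfresh (fun b hb => by simp [hb]) (fun b hb => by simp [hb]),
        fun r hr _ _ => Or.inr (hhead r hr)⟩
    exact (hmin _ hI' ha.1).resolve_right ha.2

theorem stmt4 {α : Type*} (P : Set (Rule α)) (k : ℕ) (hk : 1 ≤ k)
    (p : Fin k → α) (hinj : Function.Injective p)
    (hfresh : ∀ r ∈ P, ∀ j : Fin k, r.head ≠ p j ∧ p j ∉ r.pos ∧ p j ∉ r.neg)
    (Bpos Bneg : Finset α)
    (hBpos : ∀ j : Fin k, p j ∉ Bpos) (hBneg : ∀ j : Fin k, p j ∉ Bneg)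
    -- the standard translation `st(r)` of the exclusive disjunctive rule `p₁ ⊕ ⋯ ⊕ p_k ← B`
    (st : Set (Rule α))
    (hst : st = {r | ∃ j : Fin k,
        r = ⟨p j, ↑Bpos, ↑Bneg ∪ {a | ∃ i : Fin k, i ≠ j ∧ a = p i}⟩}) :
    (∀ M' : Set α, IsStableModel (P ∪ st) M' ↔
      ((∃ (M : Set α) (j : Fin k), IsStableModel P M ∧
          (↑Bpos : Set α) ⊆ M ∧ (∀ a ∈ Bneg, a ∉ M) ∧ M' = M ∪ {p j}) ∨
       (IsStableModel P M' ∧ ¬((↑Bpos : Set α) ⊆ M' ∧ ∀ a ∈ Bneg, a ∉ M')))) ∧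
    (∀ M' : Set α, IsStableModel (P ∪ st) M' →
      (↑Bpos : Set α) ⊆ M' → (∀ a ∈ Bneg, a ∉ M') → ∃! j : Fin k, p j ∈ M') := by
  have hfresh' : ∀ r ∈ P, ∀ a ∈ Set.range p, r.head ≠ a ∧ a ∉ r.pos ∧ a ∉ r.neg := by
    rintro r hr _ ⟨j, rfl⟩
    exact hfresh r hr j
  have hhead : ∀ r ∈ st, r.head ∈ Set.range p := by
    subst hst
    rintro _ ⟨j, rfl⟩
    exact ⟨j, rfl⟩
  have hclosed_st : ∀ M I : Set α, ClosedUnderReduct st M I ↔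
      ∀ j, (∀ a ∈ Bneg, a ∉ M) → (∀ i, i ≠ j → p i ∉ M) → (↑Bpos : Set α) ⊆ I → p j ∈ I := by
    subst hst
    intro M I
    constructor
    · intro h j hneg hp hpos
      refine h _ ⟨j, rfl⟩ ?_ hpos
      rintro c (hc | ⟨i, hi, rfl⟩)
      exacts [hneg c hc, hp i hi]
    · rintro h _ ⟨j, rfl⟩ hneg hpos
      exact h j (fun a ha => hneg a (Or.inl ha)) (fun i hi => hneg _ (Or.inr ⟨i, hi, rfl⟩)) hpos
  have hclosed_diff : ∀ M : Set α, IsStableModel (P ∪ st) M →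
      ClosedUnderReduct st M (M \ Set.range p) → ∀ j, p j ∉ M := by
    intro M hM hst_diff j hj
    obtain ⟨hclosed, hmin⟩ := isStableModel_iff.1 hM
    have hP := (closedUnderReduct_union.1 hclosed).1.congr (I' := M \ Set.range p) hfresh'
      (fun _ _ => Iff.rfl) (fun b hb => by simp [hb])
    exact (hmin _ (closedUnderReduct_union.2 ⟨hP, hst_diff⟩) hj).2 ⟨j, rfl⟩
  have hunique : ∀ M' : Set α, IsStableModel (P ∪ st) M' →
      (↑Bpos : Set α) ⊆ M' → (∀ a ∈ Bneg, a ∉ M') → ∃! j : Fin k, p j ∈ M' := by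
    intro M' hM' hpos hneg
    have hcl := (hclosed_st _ _).1
      (closedUnderReduct_union.1 (isStableModel_iff.1 hM').1).2
    obtain ⟨j, hj⟩ : ∃ j, p j ∈ M' := by
      by_contra! hnone
      exact hnone ⟨0, hk⟩ (hcl _ hneg (fun i _ => hnone i) hpos)
    refine ⟨j, hj, fun i hi => ?_⟩
    by_contra hij
    refine hclosed_diff M' hM' ((hclosed_st _ _).2 fun l _ hl _ => ?_) j hj
    by_cases hjl : j = l
    · exact absurd hi (hl i (hjl ▸ hij))
    · exact absurd hj (hl j hjl)
  refine ⟨fun M' => ⟨fun hM' => ?_, ?_⟩, hunique⟩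
  · have hdiff := hM'.diff_of_union hfresh' hhead
    by_cases hB : (↑Bpos : Set α) ⊆ M' ∧ ∀ a ∈ Bneg, a ∉ M'
    · obtain ⟨j, hj, huniq⟩ := hunique M' hM' hB.1 hB.2
      refine Or.inl ⟨M' \ Set.range p, j, hdiff, fun a ha => ⟨hB.1 ha, ?_⟩,
        fun a ha h => hB.2 a ha h.1, ?_⟩
      · rintro ⟨i, rfl⟩
        exact hBpos i ha
      · ext a
        constructor
        · intro ha
          by_cases hp : a ∈ Set.range p
          · obtain ⟨i, rfl⟩ := hp
            exact Or.inr (congrArg p (huniq i ha))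
          · exact Or.inl ⟨ha, hp⟩
        · rintro (ha | rfl)
          exacts [ha.1, hj]
    · have hnone := hclosed_diff M' hM' ((hclosed_st _ _).2 fun l hneg _ hpos =>
        absurd ⟨hpos.trans Set.sdiff_subset, hneg⟩ hB)
      have heq : M' \ Set.range p = M' := by
        refine sdiff_eq_left.2 (Set.disjoint_left.2 ?_)
        rintro _ ha ⟨j, rfl⟩
        exact hnone j ha
      exact Or.inr ⟨heq ▸ hdiff, hB⟩
  · rintro (⟨M, j, hM, hpos, hneg, rfl⟩ | ⟨hM', hB⟩)
    · have hnot : ∀ i, p i ∉ M := fun i => hM.notMem_of_fresh hfresh' ⟨i, rfl⟩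
      have hagree : ∀ a ∉ Set.range p, a ∈ M ↔ a ∈ M ∪ {p j} := fun a ha =>
        ⟨Or.inl, fun h => h.resolve_right fun h' => ha ⟨j, h'.symm⟩⟩
      obtain ⟨hclosed, hmin⟩ := isStableModel_iff.1 hM
      refine isStableModel_iff.2 ⟨closedUnderReduct_union.2
        ⟨hclosed.congr hfresh' hagree hagree, (hclosed_st _ _).2 fun l _ hl _ => ?_⟩,
        fun I hI => ?_⟩
      · by_cases hjl : j = l
        · exact Or.inr (congrArg p hjl.symm)
        · exact absurd (Or.inr rfl) (hl j hjl)
      · obtain ⟨hIP, hIst⟩ := closedUnderReduct_union.1 hI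
        have hMI : M ⊆ I := hmin I
          (hIP.congr hfresh' (fun a ha => (hagree a ha).symm) fun _ _ => Iff.rfl)
        refine Set.union_subset hMI (Set.singleton_subset_iff.2
          ((hclosed_st _ _).1 hIst j ?_ ?_ (hpos.trans hMI)))
        · rintro a ha (haM | rfl)
          exacts [hneg a ha haM, hBneg j ha]
        · rintro i hij (hiM | hi)
          exacts [hnot i hiM, hij (hinj hi)]
    · obtain ⟨hclosed, hmin⟩ := isStableModel_iff.1 hM'
      exact isStableModel_iff.2 ⟨closedUnderReduct_union.2
        ⟨hclosed, (hclosed_st _ _).2 fun l hneg _ hpos => absurd ⟨hpos, hneg⟩ hB⟩,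
        fun I hI => hmin I (closedUnderReduct_union.1 hI).1⟩
end

section
/- Let X be a finite set and L a finite nonempty set, and consider the ground normal logic program P over the atoms {p(x,l) : x ∈ X, l ∈ L} ∪ {diff(x,l) : x ∈ X, l ∈ L} consisting, for all x ∈ X and l ∈ L, of the rules p(x,l) ← ¬diff(x,l) and, for all l' ∈ L with l' ≠ l, diff(x,l) ← p(x,l') (the standard translation of the generalized partition rule ⊕_L p(X,L)). Then the stable models of P are exactly the interpretations M_f = {p(x, f(x)) : x ∈ X} ∪ {diff(x,l) : x ∈ X, l ∈ L, l ≠ f(x)} for functions f : X → L. Hence the stable models of P are in bijection with the functions from X to L. -/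
/-- Atoms of the generalized partition program: `p(x,l)` and `diff(x,l)`. -/
inductive PAtom (X L : Type*) where
  | p : X → L → PAtom X L
  | diff : X → L → PAtom X L

/-- Standard translation of the generalized partition rule `⊕_L p(X,L)`:
`p(x,l) ← ¬diff(x,l)` and `diff(x,l) ← p(x,l')` for all `x`, `l`, and `l' ≠ l`. -/
def partitionProgram (X L : Type*) : Set (Rule (PAtom X L)) :=
  {r | ∃ (x : X) (l : L), r = ⟨PAtom.p x l, ∅, {PAtom.diff x l}⟩} ∪
  {r | ∃ (x : X) (l l' : L), l' ≠ l ∧ r = ⟨PAtom.diff x l, {PAtom.p x l'}, ∅⟩}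

/-- A set of atoms is a stable model of the partition program iff it satisfies the completion
of the program. -/
lemma isStableModel_partitionProgram_iff {X L : Type*} (M : Set (PAtom X L)) :
    IsStableModel (partitionProgram X L) M ↔
      (∀ x l, PAtom.p x l ∈ M ↔ PAtom.diff x l ∉ M) ∧
      (∀ x l, PAtom.diff x l ∈ M ↔ ∃ l', l' ≠ l ∧ PAtom.p x l' ∈ M) := by
  have closed_iff : ∀ I, ClosedUnderReduct (partitionProgram X L) M I ↔
      (∀ x l, PAtom.diff x l ∉ M → PAtom.p x l ∈ I) ∧
      (∀ x l l', l' ≠ l → PAtom.p x l' ∈ I → PAtom.diff x l ∈ I) := by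
    intro I
    constructor
    · intro h
      refine ⟨fun x l hd => h _ (Or.inl ⟨x, l, rfl⟩) ?_ (Set.empty_subset _),
        fun x l l' hl hp => h _ (Or.inr ⟨x, l, l', hl, rfl⟩) (fun c hc => hc.elim) ?_⟩
      · rintro c rfl
        exact hd
      · rintro c rfl
        exact hp
    · rintro ⟨h₁, h₂⟩ r (⟨x, l, rfl⟩ | ⟨x, l, l', hl, rfl⟩) hn hp
      · exact h₁ x l (hn _ rfl)
      · exact h₂ x l l' hl (hp rfl)
  constructor
  · intro h
    have hM : ClosedUnderReduct (partitionProgram X L) M M := by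
      rw [closed_iff]
      have mem_iff : ∀ a, a ∈ M ↔ ∀ I, ClosedUnderReduct (partitionProgram X L) M I → a ∈ I :=
        fun a => Set.ext_iff.1 h a
      refine ⟨fun x l hd => (mem_iff _).2 fun I hI => ((closed_iff I).1 hI).1 x l hd,
        fun x l l' hl hp => (mem_iff _).2 fun I hI => ((closed_iff I).1 hI).2 x l l' hl ?_⟩
      exact (mem_iff _).1 hp I hI
    have least : ∀ I, ClosedUnderReduct (partitionProgram X L) M I → M ⊆ I := by
      intro I hI a ha
      exact (Set.ext_iff.1 h a).1 ha I hI
    have hM' := (closed_iff M).1 hM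
    let J : Set (PAtom X L) := fun
      | .p x l => PAtom.diff x l ∉ M
      | .diff x l => ∃ l', l' ≠ l ∧ PAtom.diff x l' ∉ M
    have hJ : M ⊆ J :=
      least J ((closed_iff J).2 ⟨fun _ _ hd => hd, fun _ _ l' hl hp => ⟨l', hl, hp⟩⟩)
    refine ⟨fun x l => ⟨fun hp => hJ hp, hM'.1 x l⟩, fun x l => ⟨fun hd => ?_, ?_⟩⟩
    · obtain ⟨l', hl, hd'⟩ := hJ hd
      exact ⟨l', hl, hM'.1 x l' hd'⟩
    · rintro ⟨l', hl, hp⟩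
      exact hM'.2 x l l' hl hp
  · rintro ⟨h₁, h₂⟩
    refine Set.Subset.antisymm ?_ (Set.sInter_subset_of_mem ((closed_iff M).2
      ⟨fun x l => (h₁ x l).2, fun x l l' hl hp => (h₂ x l).2 ⟨l', hl, hp⟩⟩))
    rintro a ha I hI
    obtain ⟨hI₁, hI₂⟩ := (closed_iff I).1 hI
    cases a with
    | p x l => exact hI₁ x l ((h₁ x l).1 ha)
    | diff x l =>
      obtain ⟨l', hl, hp⟩ := (h₂ x l).1 ha
      exact hI₂ x l l' hl (hI₁ x l' ((h₁ x l').1 hp))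

/-- The interpretation `M_f` determined by a function `f : X → L`. -/
def partitionModel {X L : Type*} (f : X → L) : Set (PAtom X L) :=
  {a | ∃ x : X, a = PAtom.p x (f x)} ∪
    {a | ∃ (x : X) (l : L), l ≠ f x ∧ a = PAtom.diff x l}

lemma p_mem_partitionModel {X L : Type*} {f : X → L} {x : X} {l : L} :
    PAtom.p x l ∈ partitionModel f ↔ l = f x := by
  simp [partitionModel]

lemma diff_mem_partitionModel {X L : Type*} {f : X → L} {x : X} {l : L} :
    PAtom.diff x l ∈ partitionModel f ↔ l ≠ f x := by
  simp [partitionModel]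

lemma partitionModel_injective {X L : Type*} :
    Function.Injective (partitionModel : (X → L) → Set (PAtom X L)) := by
  intro f g h
  funext x
  rw [← p_mem_partitionModel, ← h, p_mem_partitionModel]

lemma isStableModel_partitionProgram_iff_exists {X L : Type*} [Nonempty L]
    (M : Set (PAtom X L)) :
    IsStableModel (partitionProgram X L) M ↔ ∃ f : X → L, M = partitionModel f := by
  rw [isStableModel_partitionProgram_iff]
  constructor
  · rintro ⟨h₁, h₂⟩
    have exists_p : ∀ x, ∃ l, PAtom.p x l ∈ M := by
      intro x
      by_contra! hx
      obtain ⟨l⟩ := ‹Nonempty L›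
      obtain ⟨l', -, hp⟩ := (h₂ x l).1 (not_not.1 (mt (h₁ x l).2 (hx l)))
      exact hx l' hp
    choose f hf using exists_p
    have p_iff : ∀ x l, PAtom.p x l ∈ M ↔ l = f x := by
      refine fun x l => ⟨fun hp => ?_, fun h => h ▸ hf x⟩
      by_contra hl
      exact (h₁ x l).1 hp ((h₂ x l).2 ⟨f x, Ne.symm hl, hf x⟩)
    refine ⟨f, Set.ext fun a => ?_⟩
    cases a with
    | p x l => rw [p_iff, p_mem_partitionModel]
    | diff x l => rw [diff_mem_partitionModel, ne_eq, ← p_iff, h₁, not_not]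
  · rintro ⟨f, rfl⟩
    simp only [p_mem_partitionModel, diff_mem_partitionModel]
    refine ⟨fun x l => not_not.symm, fun x l => ⟨fun hl => ⟨f x, hl.symm, rfl⟩, ?_⟩⟩
    rintro ⟨l', hl, rfl⟩
    exact hl.symm

theorem stmt5 {X L : Type*} [Finite X] [Finite L] [Nonempty L] :
    (∀ M : Set (PAtom X L), IsStableModel (partitionProgram X L) M ↔
      ∃ f : X → L, M = {a | ∃ x : X, a = PAtom.p x (f x)} ∪
        {a | ∃ (x : X) (l : L), l ≠ f x ∧ a = PAtom.diff x l}) ∧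
    Nonempty ({M : Set (PAtom X L) // IsStableModel (partitionProgram X L) M} ≃ (X → L)) := by
  refine ⟨isStableModel_partitionProgram_iff_exists, ⟨Equiv.symm (Equiv.ofBijective
    (fun f => ⟨partitionModel f, (isStableModel_partitionProgram_iff_exists _).2 ⟨f, rfl⟩⟩)
    ⟨fun f g h => partitionModel_injective (congrArg Subtype.val h), ?_⟩)⟩⟩
  rintro ⟨M, hM⟩
  obtain ⟨f, rfl⟩ := (isStableModel_partitionProgram_iff_exists M).1 hM
  exact ⟨f, rfl⟩
end

section
/- Let G = (N, E) be a finite simple graph and C a finite nonempty set of colors, and let P(G,C) be the ground normal logic program consisting of the graph facts together with the standard translation of the k-coloring program: the generalized partition rule ⊕_C col(X,C) ← node(X), color(C) and the constraint ⇐ edge(X,Y), col(X,C), col(Y,C) (translated as c₀ ← edge(x,y), col(x,c), col(y,c), ¬c₀ with fresh atom c₀). Then the stable models of P(G,C) are in bijection with the proper colorings of G with colors in C, i.e., the functions col : N → C such that col(x) ≠ col(y) whenever {x,y} ∈ E; the stable model corresponding to col contains exactly the atoms col(x, col(x)) among the col-atoms. In particular, P(G,C) has a stable model if and only if G admits a proper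 coloring with colors from C. -/
/-- Atoms of the k-coloring program. -/
inductive CAtom (V C : Type*) where
  | node : V → CAtom V C
  | color : C → CAtom V C
  | edge : V → V → CAtom V C
  | col : V → C → CAtom V C
  | diff : V → C → CAtom V C
  | c0 : CAtom V C

/-- The ground program `P(G,C)`: graph facts plus the standard translation of the
generalized partition rule `⊕_C col(X,C) ← node(X), color(C)` and of the constraint
`⇐ edge(X,Y), col(X,C), col(Y,C)`. -/
def colProgram {V C : Type*} (G : SimpleGraph V) : Set (Rule (CAtom V C)) :=
  {r | ∃ x : V, r = Rule.fact (CAtom.node x)} ∪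
  {r | ∃ c : C, r = Rule.fact (CAtom.color c)} ∪
  {r | ∃ x y : V, G.Adj x y ∧ r = Rule.fact (CAtom.edge x y)} ∪
  {r | ∃ (x : V) (c : C), r = ⟨CAtom.col x c, ∅, {CAtom.diff x c}⟩} ∪
  {r | ∃ (x : V) (c c' : C), c' ≠ c ∧ r = ⟨CAtom.diff x c, {CAtom.col x c'}, ∅⟩} ∪
  {r | ∃ (x y : V) (c : C),
      r = ⟨CAtom.c0, {CAtom.edge x y, CAtom.col x c, CAtom.col y c}, {CAtom.c0}⟩}

/-- The interpretation corresponding to a coloring `f`. -/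
def colModel {V C : Type*} (G : SimpleGraph V) (f : V → C) : Set (CAtom V C) :=
  {a | ∃ x : V, a = CAtom.node x} ∪
  {a | ∃ c : C, a = CAtom.color c} ∪
  {a | ∃ x y : V, G.Adj x y ∧ a = CAtom.edge x y} ∪
  {a | ∃ x : V, a = CAtom.col x (f x)} ∪
  {a | ∃ (x : V) (c : C), c ≠ f x ∧ a = CAtom.diff x c}

theorem leastReductModel_subset {α : Type*} {P : Set (Rule α)} {M I : Set α}
    (h : ClosedUnderReduct P M I) : LeastReductModel P M ⊆ I :=
  Set.sInter_subset_of_mem h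

theorem closedUnderReduct_leastReductModel {α : Type*} (P : Set (Rule α)) (M : Set α) :
    ClosedUnderReduct P M (LeastReductModel P M) := fun r hr hneg hpos _ hI =>
  hI r hr hneg (hpos.trans (leastReductModel_subset hI))

/-- Every atom of a stable model is supported by a rule whose body holds in the model. -/
theorem IsStableModel.exists_rule {α : Type*} {P : Set (Rule α)} {M : Set α}
    (h : IsStableModel P M) {a : α} (ha : a ∈ M) :
    ∃ r ∈ P, r.head = a ∧ (∀ c ∈ r.neg, c ∉ M) ∧ r.pos ⊆ M := by
  by_contra! hno
  obtain ⟨hM, hle⟩ := isStableModel_iff.1 h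
  have hclosed : ClosedUnderReduct P M (M \ {a}) := by
    intro r hr hneg hpos
    have hposM := hpos.trans Set.sdiff_subset
    exact ⟨hM r hr hneg hposM, fun heq => hno r hr heq hneg hposM⟩
  exact (hle _ hclosed ha).2 rfl

section Coloring

variable {V C : Type*} {G : SimpleGraph V}

theorem closedUnderReduct_colProgram_iff {M I : Set (CAtom V C)} :
    ClosedUnderReduct (colProgram G) M I ↔
      (∀ x, CAtom.node x ∈ I) ∧ (∀ c, CAtom.color c ∈ I) ∧
      (∀ x y, G.Adj x y → CAtom.edge x y ∈ I) ∧
      (∀ x c, CAtom.diff x c ∉ M → CAtom.col x c ∈ I) ∧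
      (∀ x c c', c' ≠ c → CAtom.col x c' ∈ I → CAtom.diff x c ∈ I) ∧
      (∀ x y c, CAtom.c0 ∉ M → CAtom.edge x y ∈ I → CAtom.col x c ∈ I → CAtom.col y c ∈ I →
        CAtom.c0 ∈ I) := by
  constructor
  · intro h
    refine ⟨fun x => ?_, fun c => ?_, fun x y hxy => ?_, fun x c hd => ?_,
      fun x c c' hne hc => ?_, fun x y c h0 he hx hy => ?_⟩
    · exact h (Rule.fact (.node x)) (.inl <| .inl <| .inl <| .inl <| .inl ⟨x, rfl⟩)
        (by simp [Rule.fact]) (by simp [Rule.fact])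
    · exact h (Rule.fact (.color c)) (.inl <| .inl <| .inl <| .inl <| .inr ⟨c, rfl⟩)
        (by simp [Rule.fact]) (by simp [Rule.fact])
    · exact h (Rule.fact (.edge x y))
        (.inl <| .inl <| .inl <| .inr ⟨x, y, hxy, rfl⟩) (by simp [Rule.fact])
        (by simp [Rule.fact])
    · exact h ⟨.col x c, ∅, {.diff x c}⟩ (.inl <| .inl <| .inr ⟨x, c, rfl⟩) (by simpa using hd)
        (by simp)
    · exact h ⟨.diff x c, {.col x c'}, ∅⟩ (.inl <| .inr ⟨x, c, c', hne, rfl⟩) (by simp)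
        (by simpa using hc)
    · exact h ⟨.c0, {.edge x y, .col x c, .col y c}, {.c0}⟩ (.inr ⟨x, y, c, rfl⟩)
        (by simpa using h0) (by simp [Set.insert_subset_iff, he, hx, hy])
  · rintro ⟨hnode, hcolor, hedge, hcol, hdiff, hc0⟩ r hr hneg hpos
    rcases hr with (((((⟨x, rfl⟩ | ⟨c, rfl⟩) | ⟨x, y, hxy, rfl⟩) | ⟨x, c, rfl⟩) |
      ⟨x, c, c', hne, rfl⟩) | ⟨x, y, c, rfl⟩)
    · exact hnode x
    · exact hcolor c
    · exact hedge x y hxy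
    · exact hcol x c (hneg _ rfl)
    · exact hdiff x c c' hne (hpos rfl)
    · exact hc0 x y c (hneg _ rfl) (hpos (by simp)) (hpos (by simp)) (hpos (by simp))

namespace IsStableModel

variable {M : Set (CAtom V C)}

theorem edge_mem_iff (h : IsStableModel (colProgram G) M) {x y : V} :
    CAtom.edge x y ∈ M ↔ G.Adj x y := by
  refine ⟨fun hmem => ?_, (closedUnderReduct_colProgram_iff.1 (isStableModel_iff.1 h).1).2.2.1 x y⟩
  obtain ⟨r, hr, hhead, -, -⟩ := h.exists_rule hmem
  rcases hr with (((((⟨_, rfl⟩ | ⟨_, rfl⟩) | ⟨_, _, hxy, rfl⟩) | ⟨_, _, rfl⟩) |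
    ⟨_, _, _, _, rfl⟩) | ⟨_, _, _, rfl⟩) <;> cases hhead
  exact hxy

theorem col_mem_iff (h : IsStableModel (colProgram G) M) {x : V} {c : C} :
    CAtom.col x c ∈ M ↔ CAtom.diff x c ∉ M := by
  refine ⟨fun hmem => ?_,
    (closedUnderReduct_colProgram_iff.1 (isStableModel_iff.1 h).1).2.2.2.1 x c⟩
  obtain ⟨r, hr, hhead, hneg, -⟩ := h.exists_rule hmem
  rcases hr with (((((⟨_, rfl⟩ | ⟨_, rfl⟩) | ⟨_, _, _, rfl⟩) | ⟨_, _, rfl⟩) |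
    ⟨_, _, _, _, rfl⟩) | ⟨_, _, _, rfl⟩) <;> cases hhead
  exact hneg _ rfl

theorem diff_mem_iff (h : IsStableModel (colProgram G) M) {x : V} {c : C} :
    CAtom.diff x c ∈ M ↔ ∃ c', c' ≠ c ∧ CAtom.col x c' ∈ M := by
  refine ⟨fun hmem => ?_, fun ⟨c', hne, hc⟩ =>
    (closedUnderReduct_colProgram_iff.1 (isStableModel_iff.1 h).1).2.2.2.2.1 x c c' hne hc⟩
  obtain ⟨r, hr, hhead, -, hpos⟩ := h.exists_rule hmem
  rcases hr with (((((⟨_, rfl⟩ | ⟨_, rfl⟩) | ⟨_, _, _, rfl⟩) | ⟨_, _, rfl⟩) |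
    ⟨_, _, c', hne, rfl⟩) | ⟨_, _, _, rfl⟩) <;> cases hhead
  exact ⟨c', hne, hpos rfl⟩

theorem c0_notMem (h : IsStableModel (colProgram G) M) : CAtom.c0 ∉ M := by
  intro hmem
  obtain ⟨r, hr, hhead, hneg, -⟩ := h.exists_rule hmem
  rcases hr with (((((⟨_, rfl⟩ | ⟨_, rfl⟩) | ⟨_, _, _, rfl⟩) | ⟨_, _, rfl⟩) |
    ⟨_, _, _, _, rfl⟩) | ⟨_, _, _, rfl⟩) <;> cases hhead
  exact hneg _ rfl hmem

theorem existsUnique_col_mem [Nonempty C] (h : IsStableModel (colProgram G) M) (x : V) :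
    ∃! c, CAtom.col x c ∈ M := by
  have hex : ∃ c, CAtom.col x c ∈ M := by
    by_contra! hno
    obtain ⟨c⟩ := ‹Nonempty C›
    obtain ⟨c', -, hc'⟩ := h.diff_mem_iff.1 (not_not.1 (h.col_mem_iff.not.1 (hno c)))
    exact hno c' hc'
  obtain ⟨c, hc⟩ := hex
  refine ⟨c, hc, fun c' hc' => ?_⟩
  by_contra hne
  exact h.col_mem_iff.1 hc (h.diff_mem_iff.2 ⟨c', hne, hc'⟩)

theorem exists_eq_colModel [Nonempty C] (h : IsStableModel (colProgram G) M) :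
    ∃ f : V → C, (∀ x y : V, G.Adj x y → f x ≠ f y) ∧ M = colModel G f := by
  choose f hf huniq using h.existsUnique_col_mem
  obtain ⟨hnode, hcolor, -, -, -, hc0⟩ :=
    closedUnderReduct_colProgram_iff.1 (isStableModel_iff.1 h).1
  have hcol : ∀ x c, CAtom.col x c ∈ M ↔ c = f x :=
    fun x c => ⟨huniq x c, fun hc => hc ▸ hf x⟩
  refine ⟨f, fun x y hxy heq => ?_, ?_⟩
  · exact h.c0_notMem (hc0 x y (f x) h.c0_notMem (h.edge_mem_iff.2 hxy) (hf x) (heq ▸ hf y))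
  · have hdiff : ∀ x c, CAtom.diff x c ∈ M ↔ c ≠ f x := fun x c => by
      rw [ne_eq, ← hcol, h.col_mem_iff, not_not]
    ext a
    cases a with
    | node x => simp [colModel, hnode]
    | color c => simp [colModel, hcolor]
    | edge x y => simp [colModel, h.edge_mem_iff]
    | col x c => simp [colModel, hcol]
    | diff x c => simp [colModel, hdiff]
    | c0 => simp [colModel, h.c0_notMem]

end IsStableModel

theorem isStableModel_colModel {f : V → C} (hf : ∀ x y : V, G.Adj x y → f x ≠ f y) :
    IsStableModel (colProgram G) (colModel G f) := by
  rw [isStableModel_iff]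
  constructor
  · rw [closedUnderReduct_colProgram_iff]
    refine ⟨by simp [colModel], by simp [colModel], by simp [colModel], by simp [colModel],
      fun x c c' hne hc => ?_, fun x y c _ he hx hy => ?_⟩
    · have hc' : c' = f x := by simpa [colModel] using hc
      simpa [colModel, ← hc'] using hne.symm
    · have hxy : G.Adj x y := by simpa [colModel] using he
      have hcx : c = f x := by simpa [colModel] using hx
      have hcy : c = f y := by simpa [colModel] using hy
      exact absurd (hcx.symm.trans hcy) (hf x y hxy)
  · intro I hI
    obtain ⟨hnode, hcolor, hedge, hcol, hdiff, -⟩ := closedUnderReduct_colProgram_iff.1 hI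
    have hcolf : ∀ x, CAtom.col x (f x) ∈ I := fun x => hcol x (f x) (by simp [colModel])
    rintro a ((((⟨x, rfl⟩ | ⟨c, rfl⟩) | ⟨x, y, hxy, rfl⟩) | ⟨x, rfl⟩) | ⟨x, c, hne, rfl⟩)
    · exact hnode x
    · exact hcolor c
    · exact hedge x y hxy
    · exact hcolf x
    · exact hdiff x c (f x) hne.symm (hcolf x)

theorem colModel_injective : Function.Injective (colModel G : (V → C) → Set (CAtom V C)) := by
  intro f g hfg
  funext x
  have hx : CAtom.col x (f x) ∈ colModel G g := hfg ▸ (by simp [colModel])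
  simpa [colModel] using hx

theorem isStableModel_colProgram_iff [Nonempty C] {M : Set (CAtom V C)} :
    IsStableModel (colProgram G) M ↔
      ∃ f : V → C, (∀ x y : V, G.Adj x y → f x ≠ f y) ∧ M = colModel G f :=
  ⟨IsStableModel.exists_eq_colModel, fun ⟨_, hf, hM⟩ => hM ▸ isStableModel_colModel hf⟩

end Coloring

theorem stmt6 {V C : Type*} [Fintype V] [Fintype C] [Nonempty C] (G : SimpleGraph V) :
    (∀ M : Set (CAtom V C), IsStableModel (colProgram G) M ↔
      ∃ f : V → C, (∀ x y : V, G.Adj x y → f x ≠ f y) ∧ M = colModel G f) ∧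
    Nonempty ({M : Set (CAtom V C) // IsStableModel (colProgram G) M} ≃
      {f : V → C // ∀ x y : V, G.Adj x y → f x ≠ f y}) ∧
    ((∃ M : Set (CAtom V C), IsStableModel (colProgram G) M) ↔
      ∃ f : V → C, ∀ x y : V, G.Adj x y → f x ≠ f y) := by
  refine ⟨fun M => isStableModel_colProgram_iff, ⟨(Equiv.ofBijective
    (fun f : {f : V → C // ∀ x y : V, G.Adj x y → f x ≠ f y} =>
      (⟨colModel G f.1, isStableModel_colModel f.2⟩ :
        {M : Set (CAtom V C) // IsStableModel (colProgram G) M})) ⟨?_, ?_⟩).symm⟩, ?_⟩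
  · intro f g hfg
    exact Subtype.ext (colModel_injective (congrArg Subtype.val hfg))
  · rintro ⟨M, hM⟩
    obtain ⟨f, hf, rfl⟩ := hM.exists_eq_colModel
    exact ⟨⟨f, hf⟩, rfl⟩
  · refine ⟨fun ⟨M, hM⟩ => ?_, fun ⟨f, hf⟩ => ⟨_, isStableModel_colModel hf⟩⟩
    obtain ⟨f, hf, -⟩ := hM.exists_eq_colModel
    exact ⟨f, hf⟩
end

section
/- Let G = (N, E) be a finite simple graph and C a finite set of colors with |C| at least the chromatic number of G. In the ground min-coloring program over G and C (the k-coloring program together with the rule used_color(C) ← col(X,C)), the minimum over all stable models M of the cardinality of {c ∈ C : used_color(c) ∈ M} equals the chromatic number of G, i.e., the least number of colors in a proper coloring of G. Moreover, the colorings induced by the stable models achieving this minimum are exactly the proper colorings of G with colors in C using the minimum possible number of distinct colors. -/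
/-- Atoms of the min-coloring program. -/
inductive MCAtom (V C : Type*) where
  | node : V → MCAtom V C
  | color : C → MCAtom V C
  | edge : V → V → MCAtom V C
  | col : V → C → MCAtom V C
  | diff : V → C → MCAtom V C
  | used : C → MCAtom V C
  | c0 : MCAtom V C

/-- The ground min-coloring program: the k-coloring program together with the rule
`used_color(C) ← col(X,C)`. -/
def minColProgram {V C : Type*} (G : SimpleGraph V) : Set (Rule (MCAtom V C)) :=
  {r | ∃ x : V, r = Rule.fact (MCAtom.node x)} ∪
  {r | ∃ c : C, r = Rule.fact (MCAtom.color c)} ∪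
  {r | ∃ x y : V, G.Adj x y ∧ r = Rule.fact (MCAtom.edge x y)} ∪
  {r | ∃ (x : V) (c : C), r = ⟨MCAtom.col x c, ∅, {MCAtom.diff x c}⟩} ∪
  {r | ∃ (x : V) (c c' : C), c' ≠ c ∧ r = ⟨MCAtom.diff x c, {MCAtom.col x c'}, ∅⟩} ∪
  {r | ∃ (x y : V) (c : C),
      r = ⟨MCAtom.c0, {MCAtom.edge x y, MCAtom.col x c, MCAtom.col y c}, {MCAtom.c0}⟩} ∪
  {r | ∃ (x : V) (c : C), r = ⟨MCAtom.used c, {MCAtom.col x c}, ∅⟩}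

section StableModels

variable {α : Type*} {P : Set (Rule α)} {M : Set α}

theorem IsStableModel.subset_of_closed (hM : IsStableModel P M) {I : Set α}
    (hI : ClosedUnderReduct P M I) : M ⊆ I := by
  rw [hM]
  exact Set.sInter_subset_of_mem hI

theorem IsStableModel.closed (hM : IsStableModel P M) : ClosedUnderReduct P M M := by
  intro r hr hneg hpos
  rw [hM]
  exact fun I hI => hI r hr hneg (hpos.trans (hM.subset_of_closed hI))

theorem isStableModel_of_closed_of_subset (hM : ClosedUnderReduct P M M)
    (hsub : ∀ I, ClosedUnderReduct P M I → M ⊆ I) : IsStableModel P M :=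
  Set.Subset.antisymm (Set.subset_sInter hsub) (Set.sInter_subset_of_mem hM)

/-- Every atom of a stable model is the head of a rule whose body holds in the model. -/
theorem IsStableModel.exists_supporting_rule (hM : IsStableModel P M) {a : α} (ha : a ∈ M) :
    ∃ r ∈ P, r.head = a ∧ (∀ c ∈ r.neg, c ∉ M) ∧ r.pos ⊆ M := by
  by_contra h
  have hclosed : ClosedUnderReduct P M (M \ {a}) := fun r hr hneg hpos =>
    ⟨hM.closed r hr hneg (hpos.trans Set.sdiff_subset),
      fun hhead => h ⟨r, hr, hhead, hneg, hpos.trans Set.sdiff_subset⟩⟩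
  exact (hM.subset_of_closed hclosed ha).2 rfl

end StableModels

section MinColoring

variable {V C : Type*} {G : SimpleGraph V} {M I : Set (MCAtom V C)} {f : V → C}

/-- The interpretation of the min-coloring program determined by a color assignment. -/
def coloringModel (G : SimpleGraph V) (f : V → C) : Set (MCAtom V C) :=
  {a | match a with
    | .node _ => True
    | .color _ => True
    | .edge x y => G.Adj x y
    | .col x c => f x = c
    | .diff x c => f x ≠ c
    | .used c => c ∈ Set.range f
    | .c0 => False}

theorem node_mem_coloringModel (x : V) : MCAtom.node x ∈ coloringModel G f := trivial

theorem color_mem_coloringModel (c : C) : MCAtom.color c ∈ coloringModel G f := trivial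

theorem col_mem_coloringModel {x : V} {c : C} :
    MCAtom.col x c ∈ coloringModel G f ↔ f x = c := Iff.rfl

theorem used_mem_coloringModel {c : C} :
    MCAtom.used c ∈ coloringModel G f ↔ c ∈ Set.range f := Iff.rfl

theorem closedUnderReduct_minColProgram_iff :
    ClosedUnderReduct (minColProgram G) M I ↔
      (∀ x, MCAtom.node x ∈ I) ∧ (∀ c, MCAtom.color c ∈ I) ∧
      (∀ x y, G.Adj x y → MCAtom.edge x y ∈ I) ∧
      (∀ x c, MCAtom.diff x c ∉ M → MCAtom.col x c ∈ I) ∧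
      (∀ x c c', c' ≠ c → MCAtom.col x c' ∈ I → MCAtom.diff x c ∈ I) ∧
      (∀ x y c, MCAtom.c0 ∉ M → MCAtom.edge x y ∈ I → MCAtom.col x c ∈ I →
        MCAtom.col y c ∈ I → MCAtom.c0 ∈ I) ∧
      (∀ x c, MCAtom.col x c ∈ I → MCAtom.used c ∈ I) := by
  constructor
  · intro h
    refine ⟨fun x => ?_, fun c => ?_, fun x y hxy => ?_, fun x c hd => ?_,
      fun x c c' hne hc => ?_, fun x y c h0 he hx hy => ?_, fun x c hc => ?_⟩
    · refine h (Rule.fact (.node x)) ?_ (by simp [Rule.fact]) (by simp [Rule.fact])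
      exact .inl <| .inl <| .inl <| .inl <| .inl <| .inl ⟨x, rfl⟩
    · refine h (Rule.fact (.color c)) ?_ (by simp [Rule.fact]) (by simp [Rule.fact])
      exact .inl <| .inl <| .inl <| .inl <| .inl <| .inr ⟨c, rfl⟩
    · refine h (Rule.fact (.edge x y)) ?_ (by simp [Rule.fact]) (by simp [Rule.fact])
      exact .inl <| .inl <| .inl <| .inl <| .inr ⟨x, y, hxy, rfl⟩
    · refine h ⟨.col x c, ∅, {.diff x c}⟩ ?_ (by simpa using hd) (by simp)
      exact .inl <| .inl <| .inl <| .inr ⟨x, c, rfl⟩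
    · refine h ⟨.diff x c, {.col x c'}, ∅⟩ ?_ (by simp) (by simpa using hc)
      exact .inl <| .inl <| .inr ⟨x, c, c', hne, rfl⟩
    · refine h ⟨.c0, {.edge x y, .col x c, .col y c}, {.c0}⟩ ?_ (by simpa using h0)
        (by simp [Set.insert_subset_iff, he, hx, hy])
      exact .inl <| .inr ⟨x, y, c, rfl⟩
    · refine h ⟨.used c, {.col x c}, ∅⟩ ?_ (by simp) (by simpa using hc)
      exact .inr ⟨x, c, rfl⟩
  · rintro ⟨hnode, hcolor, hedge, hcol, hdiff, hc0, hused⟩ r hr hneg hpos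
    rcases hr with (((((⟨x, rfl⟩ | ⟨c, rfl⟩) | ⟨x, y, hxy, rfl⟩) | ⟨x, c, rfl⟩) |
      ⟨x, c, c', hne, rfl⟩) | ⟨x, y, c, rfl⟩) | ⟨x, c, rfl⟩
    · exact hnode x
    · exact hcolor c
    · exact hedge x y hxy
    · exact hcol x c (hneg _ rfl)
    · exact hdiff x c c' hne (hpos rfl)
    · exact hc0 x y c (hneg _ rfl) (hpos (by simp)) (hpos (by simp)) (hpos (by simp))
    · exact hused x c (hpos rfl)

theorem isStableModel_coloringModel (hf : ∀ x y, G.Adj x y → f x ≠ f y) :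
    IsStableModel (minColProgram G) (coloringModel G f) := by
  apply isStableModel_of_closed_of_subset
  · rw [closedUnderReduct_minColProgram_iff]
    refine ⟨node_mem_coloringModel, color_mem_coloringModel, fun _ _ h => h,
      fun _ _ h => not_not.mp h, ?_, ?_, fun x _ h => ⟨x, h⟩⟩
    · rintro x c c' hne rfl
      exact hne
    · exact fun x y c _ he hx hy => hf x y he (Eq.trans hx (Eq.symm hy))
  · intro I hI
    obtain ⟨hnode, hcolor, hedge, hcol, hdiff, -, hused⟩ :=
      closedUnderReduct_minColProgram_iff.mp hI
    have hcolf : ∀ x, MCAtom.col x (f x) ∈ I := fun x => hcol x _ (not_not.mpr rfl)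
    rintro (x | c | ⟨x, y⟩ | ⟨x, c⟩ | ⟨x, c⟩ | c | _) ha
    · exact hnode x
    · exact hcolor c
    · exact hedge x y ha
    · obtain rfl := col_mem_coloringModel.mp ha
      exact hcolf x
    · exact hdiff x c (f x) ha (hcolf x)
    · obtain ⟨x, rfl⟩ := used_mem_coloringModel.mp ha
      exact hused x _ (hcolf x)
    · exact ha.elim

theorem IsStableModel.c0_notMem_s7 (hM : IsStableModel (minColProgram G) M) : MCAtom.c0 ∉ M := by
  intro h
  obtain ⟨r, hr, hhead, hneg, -⟩ := hM.exists_supporting_rule h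
  simp only [minColProgram, Rule.fact, Set.mem_union, Set.mem_ofPred_eq] at hr
  rcases hr with (((((⟨x, rfl⟩ | ⟨c, rfl⟩) | ⟨x, y, hxy, rfl⟩) | ⟨x, c, rfl⟩) |
    ⟨x, c, c', hne, rfl⟩) | ⟨x, y, c, rfl⟩) | ⟨x, c, rfl⟩ <;> simp_all

theorem IsStableModel.edge_mem_iff_s7 (hM : IsStableModel (minColProgram G) M) {x y : V} :
    MCAtom.edge x y ∈ M ↔ G.Adj x y := by
  refine ⟨fun h => ?_, (closedUnderReduct_minColProgram_iff.mp hM.closed).2.2.1 x y⟩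
  obtain ⟨r, hr, hhead, -, -⟩ := hM.exists_supporting_rule h
  simp only [minColProgram, Rule.fact, Set.mem_union, Set.mem_ofPred_eq] at hr
  rcases hr with (((((⟨x, rfl⟩ | ⟨c, rfl⟩) | ⟨x, y, hxy, rfl⟩) | ⟨x, c, rfl⟩) |
    ⟨x, c, c', hne, rfl⟩) | ⟨x, y, c, rfl⟩) | ⟨x, c, rfl⟩ <;> simp_all

theorem IsStableModel.col_mem_iff_s7 (hM : IsStableModel (minColProgram G) M) {x : V} {c : C} :
    MCAtom.col x c ∈ M ↔ MCAtom.diff x c ∉ M := by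
  refine ⟨fun h => ?_, (closedUnderReduct_minColProgram_iff.mp hM.closed).2.2.2.1 x c⟩
  obtain ⟨r, hr, hhead, hneg, -⟩ := hM.exists_supporting_rule h
  simp only [minColProgram, Rule.fact, Set.mem_union, Set.mem_ofPred_eq] at hr
  rcases hr with (((((⟨x, rfl⟩ | ⟨c, rfl⟩) | ⟨x, y, hxy, rfl⟩) | ⟨x, c, rfl⟩) |
    ⟨x, c, c', hne, rfl⟩) | ⟨x, y, c, rfl⟩) | ⟨x, c, rfl⟩ <;> simp_all

theorem IsStableModel.diff_mem_iff_s7 (hM : IsStableModel (minColProgram G) M) {x : V} {c : C} :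
    MCAtom.diff x c ∈ M ↔ ∃ c' ≠ c, MCAtom.col x c' ∈ M := by
  refine ⟨fun h => ?_, fun ⟨c', hne, h⟩ =>
    (closedUnderReduct_minColProgram_iff.mp hM.closed).2.2.2.2.1 x c c' hne h⟩
  obtain ⟨r, hr, hhead, -, hpos⟩ := hM.exists_supporting_rule h
  simp only [minColProgram, Rule.fact, Set.mem_union, Set.mem_ofPred_eq] at hr
  rcases hr with (((((⟨x, rfl⟩ | ⟨c, rfl⟩) | ⟨x, y, hxy, rfl⟩) | ⟨x, c, rfl⟩) |
    ⟨x, c, c', hne, rfl⟩) | ⟨x, y, c, rfl⟩) | ⟨x, c, rfl⟩ <;> simp_all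
  exact ⟨c', hne, hpos⟩

theorem IsStableModel.used_mem_iff (hM : IsStableModel (minColProgram G) M) {c : C} :
    MCAtom.used c ∈ M ↔ ∃ x, MCAtom.col x c ∈ M := by
  refine ⟨fun h => ?_, fun ⟨x, h⟩ =>
    (closedUnderReduct_minColProgram_iff.mp hM.closed).2.2.2.2.2.2 x c h⟩
  obtain ⟨r, hr, hhead, -, hpos⟩ := hM.exists_supporting_rule h
  simp only [minColProgram, Rule.fact, Set.mem_union, Set.mem_ofPred_eq] at hr
  rcases hr with (((((⟨x, rfl⟩ | ⟨c, rfl⟩) | ⟨x, y, hxy, rfl⟩) | ⟨x, c, rfl⟩) |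
    ⟨x, c, c', hne, rfl⟩) | ⟨x, y, c, rfl⟩) | ⟨x, c, rfl⟩ <;> simp_all
  exact ⟨x, hpos⟩

/-- In a stable model every node has exactly one color. -/
theorem IsStableModel.existsUnique_col [Nonempty C] (hM : IsStableModel (minColProgram G) M)
    (x : V) : ∃! c : C, MCAtom.col x c ∈ M := by
  have hex : ∃ c : C, MCAtom.col x c ∈ M := by
    by_contra! h
    obtain ⟨c⟩ := ‹Nonempty C›
    obtain ⟨c', -, hc'⟩ := hM.diff_mem_iff_s7.mp (not_not.mp (mt hM.col_mem_iff_s7.mpr (h c)))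
    exact h c' hc'
  obtain ⟨c, hc⟩ := hex
  refine ⟨c, hc, fun c' hc' => ?_⟩
  by_contra hne
  exact hM.col_mem_iff_s7.mp hc (hM.diff_mem_iff_s7.mpr ⟨c', hne, hc'⟩)

/-- The stable models of the min-coloring program encode proper colorings. -/
theorem IsStableModel.exists_proper_coloring [Nonempty C]
    (hM : IsStableModel (minColProgram G) M) :
    ∃ f : V → C, (∀ x y, G.Adj x y → f x ≠ f y) ∧ (∀ x c, MCAtom.col x c ∈ M ↔ f x = c) ∧
      {c : C | MCAtom.used c ∈ M} = Set.range f := by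
  choose f hf huniq using hM.existsUnique_col
  have hcol : ∀ x c, MCAtom.col x c ∈ M ↔ f x = c := fun x c =>
    ⟨fun h => (huniq x c h).symm, fun h => h ▸ hf x⟩
  refine ⟨f, fun x y hxy heq => ?_, hcol, ?_⟩
  · exact hM.c0_notMem_s7 ((closedUnderReduct_minColProgram_iff.mp hM.closed).2.2.2.2.2.1 x y (f x)
      hM.c0_notMem_s7 (hM.edge_mem_iff_s7.mpr hxy) (hf x) ((hcol y _).mpr heq.symm))
  · ext c
    simp [hM.used_mem_iff, hcol]

theorem colorable_ncard_range [Finite C] (hf : ∀ x y, G.Adj x y → f x ≠ f y) :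
    G.Colorable (Set.range f).ncard := by
  have := Fintype.ofFinite (Set.range f)
  rw [← Nat.card_coe_set_eq, Nat.card_eq_fintype_card]
  exact (SimpleGraph.Coloring.mk (Set.rangeFactorization f) fun {x y} hxy h =>
    hf x y hxy (congrArg Subtype.val h)).colorable

theorem exists_proper_coloring_ncard_range_eq_sInf [Fintype C]
    (hC : G.Colorable (Fintype.card C)) :
    ∃ f : V → C, (∀ x y, G.Adj x y → f x ≠ f y) ∧
      (Set.range f).ncard = sInf {n : ℕ | G.Colorable n} := by
  obtain ⟨g⟩ : G.Colorable (sInf {n : ℕ | G.Colorable n}) :=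
    Nat.sInf_mem (s := {n : ℕ | G.Colorable n}) ⟨_, hC⟩
  obtain ⟨e⟩ : Nonempty (Fin (sInf {n : ℕ | G.Colorable n}) ↪ C) :=
    Function.Embedding.nonempty_of_card_le (by simpa using Nat.sInf_le hC)
  have hproper : ∀ x y, G.Adj x y → (e ∘ g) x ≠ (e ∘ g) y := fun x y hxy h =>
    g.valid hxy (e.injective h)
  refine ⟨e ∘ g, hproper, le_antisymm ?_ (Nat.sInf_le (colorable_ncard_range hproper))⟩
  calc (Set.range (e ∘ g)).ncard ≤ (Set.range e).ncard :=
        Set.ncard_le_ncard (Set.range_comp_subset_range g e)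
    _ = sInf {n : ℕ | G.Colorable n} := by
        rw [← Set.image_univ, Set.ncard_image_of_injective _ e.injective, Set.ncard_univ,
          Nat.card_fin]

end MinColoring

theorem stmt7 {V C : Type*} [Fintype V] [Fintype C] [Nonempty C] (G : SimpleGraph V)
    (hC : G.Colorable (Fintype.card C)) :
    IsLeast {k : ℕ | ∃ M : Set (MCAtom V C), IsStableModel (minColProgram G) M ∧
        {c : C | MCAtom.used c ∈ M}.ncard = k}
      (sInf {n : ℕ | G.Colorable n}) ∧
    (∀ f : V → C,
      (∃ M : Set (MCAtom V C), IsStableModel (minColProgram G) M ∧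
          {c : C | MCAtom.used c ∈ M}.ncard = sInf {n : ℕ | G.Colorable n} ∧
          ∀ x : V, MCAtom.col x (f x) ∈ M) ↔
      ((∀ x y : V, G.Adj x y → f x ≠ f y) ∧
        (Set.range f).ncard = sInf {n : ℕ | G.Colorable n})) := by
  refine ⟨⟨?_, ?_⟩, fun f => ⟨?_, ?_⟩⟩
  · obtain ⟨f, hf, hcard⟩ := exists_proper_coloring_ncard_range_eq_sInf hC
    exact ⟨_, isStableModel_coloringModel hf, hcard⟩
  · rintro k ⟨M, hM, rfl⟩
    obtain ⟨f, hf, -, hused⟩ := hM.exists_proper_coloring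
    rw [hused]
    exact Nat.sInf_le (colorable_ncard_range hf)
  · rintro ⟨M, hM, hcard, hcol⟩
    obtain ⟨g, hg, hcolg, hused⟩ := hM.exists_proper_coloring
    obtain rfl : g = f := funext fun x => (hcolg x _).mp (hcol x)
    exact ⟨hg, hused ▸ hcard⟩
  · rintro ⟨hf, hcard⟩
    exact ⟨_, isStableModel_coloringModel hf, hcard, fun x => col_mem_coloringModel.mpr rfl⟩
end

section
/- Let G = (N, E) be a finite simple graph and let P_eds(G) be the ground normal logic program consisting of the graph facts together with the standard translation of: the subset rule e(X,Y) ⊆ edge(X,Y), the rules v(X) ← e(X,Y) and v(Y) ← e(X,Y), and the constraint edge(X,Y) ⇒ v(X) ∨ v(Y) (translated as c₀ ← edge(x,y), ¬v(x), ¬v(y), ¬c₀). Then the sets A = {(x,y) : e(x,y) ∈ M}, for M a stable model of P_eds(G), are exactly the edge dominating sets of G, i.e., the sets A ⊆ E such that every edge of E has at least one endpoint that is an endpoint of some edge in A. Consequently, the stable models minimizing |{(x,y) : e(x,y) ∈ M}| yield exactly the minimum-cardinality edge dominating sets of G. -/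
/-- Atoms of the edge-dominating-set program. -/
inductive EAtom (V : Type*) where
  | node : V → EAtom V
  | edge : V → V → EAtom V
  | e : V → V → EAtom V
  | ehat : V → V → EAtom V
  | v : V → EAtom V
  | c0 : EAtom V

/-- The ground program `P_eds(G)`: graph facts, the translated subset rule
`e(X,Y) ⊆ edge(X,Y)` (`e(x,y) ← edge(x,y), ¬ê(x,y)`, `ê(x,y) ← edge(x,y), ¬e(x,y)`),
the rules `v(X) ← e(X,Y)` and `v(Y) ← e(X,Y)`, and the translated constraint
`c₀ ← edge(x,y), ¬v(x), ¬v(y), ¬c₀`. -/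
def edsProgram {V : Type*} (G : SimpleGraph V) : Set (Rule (EAtom V)) :=
  {r | ∃ x : V, r = Rule.fact (EAtom.node x)} ∪
  {r | ∃ x y : V, G.Adj x y ∧ r = Rule.fact (EAtom.edge x y)} ∪
  {r | ∃ x y : V, r = ⟨EAtom.e x y, {EAtom.edge x y}, {EAtom.ehat x y}⟩} ∪
  {r | ∃ x y : V, r = ⟨EAtom.ehat x y, {EAtom.edge x y}, {EAtom.e x y}⟩} ∪
  {r | ∃ x y : V, r = ⟨EAtom.v x, {EAtom.e x y}, ∅⟩} ∪
  {r | ∃ x y : V, r = ⟨EAtom.v y, {EAtom.e x y}, ∅⟩} ∪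
  {r | ∃ x y : V, r = ⟨EAtom.c0, {EAtom.edge x y}, {EAtom.v x, EAtom.v y, EAtom.c0}⟩}

/-- `A` is an edge dominating set of `G`: `A` is a set of edges such that every edge of
`G` shares an endpoint with some edge in `A`. -/
def IsEdgeDominatingSet {V : Type*} (G : SimpleGraph V) (A : Set (V × V)) : Prop :=
  A ⊆ {p : V × V | G.Adj p.1 p.2} ∧
  ∀ p : V × V, G.Adj p.1 p.2 →
    ∃ q ∈ A, p.1 = q.1 ∨ p.1 = q.2 ∨ p.2 = q.1 ∨ p.2 = q.2

theorem closedUnderReduct_edsProgram_iff {V : Type*} {G : SimpleGraph V}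
    {M I : Set (EAtom V)} :
    ClosedUnderReduct (edsProgram G) M I ↔
      (∀ x, EAtom.node x ∈ I) ∧
      (∀ x y, G.Adj x y → EAtom.edge x y ∈ I) ∧
      (∀ x y, EAtom.ehat x y ∉ M → EAtom.edge x y ∈ I → EAtom.e x y ∈ I) ∧
      (∀ x y, EAtom.e x y ∉ M → EAtom.edge x y ∈ I → EAtom.ehat x y ∈ I) ∧
      (∀ x y, EAtom.e x y ∈ I → EAtom.v x ∈ I) ∧
      (∀ x y, EAtom.e x y ∈ I → EAtom.v y ∈ I) ∧
      (∀ x y, EAtom.v x ∉ M → EAtom.v y ∉ M → EAtom.c0 ∉ M →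
        EAtom.edge x y ∈ I → EAtom.c0 ∈ I) := by
  constructor
  · intro h
    refine ⟨fun x => ?_, fun x y hxy => ?_, fun x y hn hp => ?_, fun x y hn hp => ?_,
      fun x y hp => ?_, fun x y hp => ?_, fun x y hx hy hc hp => ?_⟩
    · refine h (Rule.fact (.node x)) ?_ (by simp [Rule.fact]) (by simp [Rule.fact])
      exact .inl <| .inl <| .inl <| .inl <| .inl <| .inl ⟨x, rfl⟩
    · refine h (Rule.fact (.edge x y)) ?_ (by simp [Rule.fact]) (by simp [Rule.fact])
      exact .inl <| .inl <| .inl <| .inl <| .inl <| .inr ⟨x, y, hxy, rfl⟩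
    · exact h ⟨.e x y, {.edge x y}, {.ehat x y}⟩
        (.inl <| .inl <| .inl <| .inl <| .inr ⟨x, y, rfl⟩) (by simpa) (by simpa)
    · exact h ⟨.ehat x y, {.edge x y}, {.e x y}⟩
        (.inl <| .inl <| .inl <| .inr ⟨x, y, rfl⟩) (by simpa) (by simpa)
    · exact h ⟨.v x, {.e x y}, ∅⟩ (.inl <| .inl <| .inr ⟨x, y, rfl⟩) (by simp) (by simpa)
    · exact h ⟨.v y, {.e x y}, ∅⟩ (.inl <| .inr ⟨x, y, rfl⟩) (by simp) (by simpa)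
    · exact h ⟨.c0, {.edge x y}, {.v x, .v y, .c0}⟩ (.inr ⟨x, y, rfl⟩)
        (by simp [hx, hy, hc]) (by simpa)
  · rintro ⟨hnode, hedge, he, hehat, hv₁, hv₂, hc⟩ r hr hneg hpos
    rcases hr with (((((⟨x, rfl⟩ | ⟨x, y, hxy, rfl⟩) | ⟨x, y, rfl⟩) | ⟨x, y, rfl⟩) |
      ⟨x, y, rfl⟩) | ⟨x, y, rfl⟩) | ⟨x, y, rfl⟩
    · exact hnode x
    · exact hedge x y hxy
    · exact he x y (hneg _ rfl) (hpos rfl)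
    · exact hehat x y (hneg _ rfl) (hpos rfl)
    · exact hv₁ x y (hpos rfl)
    · exact hv₂ x y (hpos rfl)
    · exact hc x y (hneg _ (by simp)) (hneg _ (by simp)) (hneg _ (by simp)) (hpos rfl)

/-- The interpretation of the edge-dominating-set program that selects the edges in `A`. -/
def edsModel {V : Type*} (G : SimpleGraph V) (A : Set (V × V)) : Set (EAtom V) :=
  {a | match a with
    | .node _ => True
    | .edge x y => G.Adj x y
    | .e x y => (x, y) ∈ A
    | .ehat x y => G.Adj x y ∧ (x, y) ∉ A
    | .v x => ∃ q ∈ A, x = q.1 ∨ x = q.2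
    | .c0 => False}

theorem isStableModel_edsModel {V : Type*} {G : SimpleGraph V} {A : Set (V × V)}
    (hA : IsEdgeDominatingSet G A) : IsStableModel (edsProgram G) (edsModel G A) := by
  obtain ⟨hsub, hdom⟩ := hA
  rw [isStableModel_iff, closedUnderReduct_edsProgram_iff]
  simp only [closedUnderReduct_edsProgram_iff]
  simp only [edsModel, Set.mem_ofPred_eq]
  refine ⟨⟨fun _ => trivial, fun _ _ h => h, fun x y h hxy => ?_, fun x y h hxy => ⟨hxy, h⟩,
    fun x y h => ⟨_, h, .inl rfl⟩, fun x y h => ⟨_, h, .inr rfl⟩, fun x y hx hy _ hxy => ?_⟩, ?_⟩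
  · by_contra hn
    exact h ⟨hxy, hn⟩
  · obtain ⟨q, hq, h⟩ := hdom (x, y) hxy
    rcases h with h | h | h | h
    · exact hx ⟨q, hq, .inl h⟩
    · exact hx ⟨q, hq, .inr h⟩
    · exact hy ⟨q, hq, .inl h⟩
    · exact hy ⟨q, hq, .inr h⟩
  · rintro I ⟨hnode, hedge, he, hehat, hv₁, hv₂, -⟩
    have heI : ∀ x y, (x, y) ∈ A → EAtom.e x y ∈ I := fun x y h =>
      he x y (fun hn => hn.2 h) (hedge x y (hsub h))
    rintro (x | ⟨x, y⟩ | ⟨x, y⟩ | ⟨x, y⟩ | x | _) h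
    · exact hnode x
    · exact hedge x y h
    · exact heI x y h
    · exact hehat x y h.2 (hedge x y h.1)
    · obtain ⟨⟨a, b⟩, hq, rfl | rfl⟩ := h
      · exact hv₁ _ _ (heI _ _ hq)
      · exact hv₂ _ _ (heI _ _ hq)
    · exact h.elim

theorem IsStableModel.isEdgeDominatingSet {V : Type*} {G : SimpleGraph V}
    {M : Set (EAtom V)} (hM : IsStableModel (edsProgram G) M) :
    IsEdgeDominatingSet G {p : V × V | EAtom.e p.1 p.2 ∈ M} := by
  rw [isStableModel_iff, closedUnderReduct_edsProgram_iff] at hM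
  obtain ⟨⟨hnode, hedge, he, hehat, hv₁, hv₂, hc⟩, hle⟩ := hM
  simp only [closedUnderReduct_edsProgram_iff] at hle
  have hadj : ∀ x y, EAtom.e x y ∈ M → G.Adj x y := by
    intro x y h
    refine (hle {a | ∀ x y, a = .edge x y ∨ a = .e x y → G.Adj x y} ?_ h) x y (.inr rfl)
    simp +contextual
  have hc0 : EAtom.c0 ∉ M := by
    intro h
    refine (hle {a | a ∈ M ∧ a ≠ .c0} ?_ h).2 rfl
    simp only [Set.mem_ofPred_eq]
    grind
  have hv : ∀ x, EAtom.v x ∈ M → ∃ q : V × V, EAtom.e q.1 q.2 ∈ M ∧ (x = q.1 ∨ x = q.2) := by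
    intro x h
    refine (hle {a | a ∈ M ∧ ∀ x, a = .v x →
      ∃ q : V × V, EAtom.e q.1 q.2 ∈ M ∧ (x = q.1 ∨ x = q.2)} ?_ h).2 x rfl
    refine ⟨fun x => ⟨hnode x, nofun⟩, fun x y h => ⟨hedge x y h, nofun⟩,
      fun x y hn h => ⟨he x y hn h.1, nofun⟩, fun x y hn h => ⟨hehat x y hn h.1, nofun⟩,
      fun x y h => ⟨hv₁ x y h.1, ?_⟩, fun x y h => ⟨hv₂ x y h.1, ?_⟩,
      fun x y hx hy hn h => ⟨hc x y hx hy hn h.1, nofun⟩⟩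
    · rintro _ ⟨⟩
      exact ⟨(x, y), h.1, .inl rfl⟩
    · rintro _ ⟨⟩
      exact ⟨(x, y), h.1, .inr rfl⟩
  refine ⟨fun p hp => hadj _ _ hp, fun p hp => ?_⟩
  by_cases hx : EAtom.v p.1 ∈ M
  · obtain ⟨q, hq, h⟩ := hv _ hx
    exact ⟨q, hq, by tauto⟩
  by_cases hy : EAtom.v p.2 ∈ M
  · obtain ⟨q, hq, h⟩ := hv _ hy
    exact ⟨q, hq, by tauto⟩
  exact (hc0 (hc _ _ hx hy hc0 (hedge _ _ hp))).elim

theorem exists_isStableModel_iff {V : Type*} {G : SimpleGraph V} {A : Set (V × V)} :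
    (∃ M, IsStableModel (edsProgram G) M ∧ A = {p : V × V | EAtom.e p.1 p.2 ∈ M}) ↔
      IsEdgeDominatingSet G A := by
  constructor
  · rintro ⟨M, hM, rfl⟩
    exact hM.isEdgeDominatingSet
  · exact fun hA => ⟨edsModel G A, isStableModel_edsModel hA, rfl⟩

theorem stmt9 {V : Type*} [Fintype V] (G : SimpleGraph V) :
    ({A : Set (V × V) | ∃ M : Set (EAtom V), IsStableModel (edsProgram G) M ∧
        A = {p : V × V | EAtom.e p.1 p.2 ∈ M}} =
      {A : Set (V × V) | IsEdgeDominatingSet G A}) ∧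
    ({A : Set (V × V) | ∃ M : Set (EAtom V), IsStableModel (edsProgram G) M ∧
        (∀ M' : Set (EAtom V), IsStableModel (edsProgram G) M' →
          {p : V × V | EAtom.e p.1 p.2 ∈ M}.ncard ≤ {p : V × V | EAtom.e p.1 p.2 ∈ M'}.ncard) ∧
        A = {p : V × V | EAtom.e p.1 p.2 ∈ M}} =
      {A : Set (V × V) | IsEdgeDominatingSet G A ∧
        ∀ A' : Set (V × V), IsEdgeDominatingSet G A' → A.ncard ≤ A'.ncard}) := by
  refine ⟨Set.ext fun A => exists_isStableModel_iff, Set.ext fun A => ⟨?_, ?_⟩⟩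
  · rintro ⟨M, hM, hmin, rfl⟩
    refine ⟨hM.isEdgeDominatingSet, fun A' hA' => ?_⟩
    obtain ⟨M', hM', rfl⟩ := exists_isStableModel_iff.2 hA'
    exact hmin M' hM'
  · rintro ⟨hA, hmin⟩
    obtain ⟨M, hM, rfl⟩ := exists_isStableModel_iff.2 hA
    exact ⟨M, hM, fun M' hM' => hmin _ hM'.isEdgeDominatingSet, rfl⟩
end

section
/- Let a propositional CNF instance be given by a finite set X of clauses, a finite set A of variables, and relations pos, neg ⊆ X × A, where clause x is satisfied by a truth assignment S ⊆ A if there is v with (x,v) ∈ pos and v ∈ S, or (x,v) ∈ neg and v ∉ S. Let P_sat be the ground normal logic program consisting of the database facts for c, a, p, n together with the standard translation of: the subset rule s(V) ⊆ a(V) (rules s(v) ← ¬ŝ(v), ŝ(v) ← ¬s(v) for v ∈ A) and the rules f(X) ← p(X,V), s(V) and f(X) ← n(X,V), ¬s(V). Then the stable models of P_sat are in bijection with the truth assignments S ⊆ A, and in the stable model M_S corresponding to S the set {x : f(x) ∈ M_S} is exactly the set of clauses satisfied by S. Consequently, the maximum over all stable models M of |{x : f(x) ∈ M}| equals the maximum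 number of clauses of the instance that are simultaneously satisfiable by a single truth assignment. -/
/-- Atoms of the max-satisfiability program. -/
inductive SAtom (X A : Type*) where
  | c : X → SAtom X A
  | a : A → SAtom X A
  | p : X → A → SAtom X A
  | n : X → A → SAtom X A
  | s : A → SAtom X A
  | shat : A → SAtom X A
  | f : X → SAtom X A

/-- Clause `x` is satisfied by the truth assignment `S`. -/
def ClauseSat {X A : Type*} (Ppos Pneg : Set (X × A)) (x : X) (S : Set A) : Prop :=
  ∃ v : A, ((x, v) ∈ Ppos ∧ v ∈ S) ∨ ((x, v) ∈ Pneg ∧ v ∉ S)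

/-- The ground program `P_sat`: database facts, the translated subset rule `s(V) ⊆ a(V)`
(`s(v) ← ¬ŝ(v)`, `ŝ(v) ← ¬s(v)`), and the rules `f(X) ← p(X,V), s(V)` and
`f(X) ← n(X,V), ¬s(V)`. -/
def satProgram {X A : Type*} (Ppos Pneg : Set (X × A)) : Set (Rule (SAtom X A)) :=
  {r | ∃ x : X, r = Rule.fact (SAtom.c x)} ∪
  {r | ∃ v : A, r = Rule.fact (SAtom.a v)} ∪
  {r | ∃ q ∈ Ppos, r = Rule.fact (SAtom.p q.1 q.2)} ∪
  {r | ∃ q ∈ Pneg, r = Rule.fact (SAtom.n q.1 q.2)} ∪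
  {r | ∃ v : A, r = ⟨SAtom.s v, ∅, {SAtom.shat v}⟩} ∪
  {r | ∃ v : A, r = ⟨SAtom.shat v, ∅, {SAtom.s v}⟩} ∪
  {r | ∃ (x : X) (v : A), r = ⟨SAtom.f x, {SAtom.p x v, SAtom.s v}, ∅⟩} ∪
  {r | ∃ (x : X) (v : A), r = ⟨SAtom.f x, {SAtom.n x v}, {SAtom.s v}⟩}

/-- The interpretation corresponding to a truth assignment `S`. -/
def satModel {X A : Type*} (Ppos Pneg : Set (X × A)) (S : Set A) : Set (SAtom X A) :=
  {a | ∃ x : X, a = SAtom.c x} ∪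
  {a | ∃ v : A, a = SAtom.a v} ∪
  {a | ∃ q ∈ Ppos, a = SAtom.p q.1 q.2} ∪
  {a | ∃ q ∈ Pneg, a = SAtom.n q.1 q.2} ∪
  (SAtom.s '' S) ∪ (SAtom.shat '' Sᶜ) ∪
  {a | ∃ x : X, ClauseSat Ppos Pneg x S ∧ a = SAtom.f x}

theorem closedUnderReduct_satProgram_iff {X A : Type*} (Ppos Pneg : Set (X × A))
    (M I : Set (SAtom X A)) :
    ClosedUnderReduct (satProgram Ppos Pneg) M I ↔
      (∀ x, SAtom.c x ∈ I) ∧ (∀ v, SAtom.a v ∈ I) ∧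
      (∀ x v, (x, v) ∈ Ppos → SAtom.p x v ∈ I) ∧
      (∀ x v, (x, v) ∈ Pneg → SAtom.n x v ∈ I) ∧
      (∀ v, SAtom.shat v ∉ M → SAtom.s v ∈ I) ∧
      (∀ v, SAtom.s v ∉ M → SAtom.shat v ∈ I) ∧
      (∀ x v, SAtom.p x v ∈ I → SAtom.s v ∈ I → SAtom.f x ∈ I) ∧
      (∀ x v, SAtom.s v ∉ M → SAtom.n x v ∈ I → SAtom.f x ∈ I) := by
  simp only [ClosedUnderReduct, satProgram, Set.mem_union, Set.mem_ofPred_eq, or_imp, forall_and,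
    forall_exists_index, and_imp, Prod.forall, Rule.fact]
  simp only [@forall_comm (Rule _), forall_eq, and_assoc]
  simp [Set.insert_subset_iff]

/-- The least model of the reduct of `satProgram Ppos Pneg` by `M`, given atom by atom. -/
def reductAtoms {X A : Type*} (Ppos Pneg : Set (X × A)) (M : Set (SAtom X A)) :
    Set (SAtom X A) :=
  {t | match t with
    | .c _ => True
    | .a _ => True
    | .p x v => (x, v) ∈ Ppos
    | .n x v => (x, v) ∈ Pneg
    | .s v => SAtom.shat v ∉ M
    | .shat v => SAtom.s v ∉ M
    | .f x => ∃ v, ((x, v) ∈ Ppos ∧ SAtom.shat v ∉ M) ∨ ((x, v) ∈ Pneg ∧ SAtom.s v ∉ M)}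

theorem leastReductModel_satProgram {X A : Type*} (Ppos Pneg : Set (X × A))
    (M : Set (SAtom X A)) :
    LeastReductModel (satProgram Ppos Pneg) M = reductAtoms Ppos Pneg M := by
  apply Set.Subset.antisymm
  · refine Set.sInter_subset_of_mem ((closedUnderReduct_satProgram_iff ..).2 ?_)
    exact ⟨fun _ => trivial, fun _ => trivial, fun _ _ h => h, fun _ _ h => h, fun _ h => h,
      fun _ h => h, fun _ v hp hs => ⟨v, .inl ⟨hp, hs⟩⟩, fun _ v hs hn => ⟨v, .inr ⟨hn, hs⟩⟩⟩
  · refine Set.subset_sInter fun I hI => ?_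
    obtain ⟨hc, ha, hp, hn, hs, hshat, hfp, hfn⟩ := (closedUnderReduct_satProgram_iff ..).1 hI
    rintro (x | v | ⟨x, v⟩ | ⟨x, v⟩ | v | v | x) h
    · exact hc x
    · exact ha v
    · exact hp x v h
    · exact hn x v h
    · exact hs v h
    · exact hshat v h
    · obtain ⟨v, ⟨h₁, h₂⟩ | ⟨h₁, h₂⟩⟩ := h
      · exact hfp x v (hp x v h₁) (hs v h₂)
      · exact hfn x v h₂ (hn x v h₁)

section satModelMembership

variable {X A : Type*} (Ppos Pneg : Set (X × A)) (S : Set A)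

theorem s_mem_satModel (v : A) : SAtom.s v ∈ satModel Ppos Pneg S ↔ v ∈ S := by
  simp [satModel]

theorem shat_mem_satModel (v : A) : SAtom.shat v ∈ satModel Ppos Pneg S ↔ v ∉ S := by
  simp [satModel]

theorem f_mem_satModel (x : X) :
    SAtom.f x ∈ satModel Ppos Pneg S ↔ ClauseSat Ppos Pneg x S := by
  simp [satModel]

/-- If `M` encodes `S` on the atoms `s` and `ŝ`, the reduct by `M` has least model
`satModel Ppos Pneg S`. -/
theorem reductAtoms_eq_satModel (M : Set (SAtom X A)) (hs : ∀ v, SAtom.s v ∈ M ↔ v ∈ S)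
    (hshat : ∀ v, SAtom.shat v ∈ M ↔ v ∉ S) :
    reductAtoms Ppos Pneg M = satModel Ppos Pneg S := by
  ext (x | v | ⟨x, v⟩ | ⟨x, v⟩ | v | v | x) <;>
    simp [reductAtoms, satModel, ClauseSat, hs, hshat]

end satModelMembership

theorem satModel_injective {X A : Type*} (Ppos Pneg : Set (X × A)) :
    Function.Injective (satModel Ppos Pneg) := by
  intro S T h
  ext v
  rw [← s_mem_satModel Ppos Pneg S, h, s_mem_satModel]

theorem isStableModel_satProgram_iff {X A : Type*} (Ppos Pneg : Set (X × A))
    (M : Set (SAtom X A)) :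
    IsStableModel (satProgram Ppos Pneg) M ↔ ∃ S : Set A, M = satModel Ppos Pneg S := by
  rw [IsStableModel, leastReductModel_satProgram]
  constructor
  · intro h
    refine ⟨{v | SAtom.s v ∈ M}, h.trans (reductAtoms_eq_satModel _ _ _ _ (fun _ => Iff.rfl) ?_)⟩
    exact fun v => Set.ext_iff.1 h (SAtom.shat v)
  · rintro ⟨S, rfl⟩
    exact (reductAtoms_eq_satModel _ _ _ _ (s_mem_satModel _ _ _) (shat_mem_satModel _ _ _)).symm

theorem stmt10 {X A : Type*} [Fintype X] [Fintype A] (Ppos Pneg : Set (X × A)) :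
    (∀ M : Set (SAtom X A), IsStableModel (satProgram Ppos Pneg) M ↔
      ∃ S : Set A, M = satModel Ppos Pneg S) ∧
    Nonempty ({M : Set (SAtom X A) // IsStableModel (satProgram Ppos Pneg) M} ≃ Set A) ∧
    (∀ S : Set A, {x : X | SAtom.f x ∈ satModel Ppos Pneg S} =
      {x : X | ClauseSat Ppos Pneg x S}) ∧
    (sSup {k : ℕ | ∃ M : Set (SAtom X A), IsStableModel (satProgram Ppos Pneg) M ∧
        {x : X | SAtom.f x ∈ M}.ncard = k} =
      sSup {k : ℕ | ∃ S : Set A, {x : X | ClauseSat Ppos Pneg x S}.ncard = k}) := by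
  have hstable := isStableModel_satProgram_iff Ppos Pneg
  have hf (S : Set A) : {x : X | SAtom.f x ∈ satModel Ppos Pneg S} =
      {x : X | ClauseSat Ppos Pneg x S} := Set.ext (f_mem_satModel Ppos Pneg S)
  refine ⟨hstable, ⟨?_⟩, hf, ?_⟩
  · refine (Equiv.ofBijective
      (fun S => ⟨satModel Ppos Pneg S, (hstable _).2 ⟨S, rfl⟩⟩) ⟨?_, ?_⟩).symm
    · exact fun S T h => satModel_injective Ppos Pneg (congrArg Subtype.val h)
    · rintro ⟨M, hM⟩
      obtain ⟨S, rfl⟩ := (hstable M).1 hM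
      exact ⟨S, rfl⟩
  · congr 1
    ext k
    constructor
    · rintro ⟨M, hM, rfl⟩
      obtain ⟨S, rfl⟩ := (hstable M).1 hM
      exact ⟨S, by rw [hf]⟩
    · rintro ⟨S, rfl⟩
      exact ⟨satModel Ppos Pneg S, (hstable _).2 ⟨S, rfl⟩, by rw [hf]⟩
end

section
/- Let N ≥ 1 and let P_queen(N) be the ground normal logic program consisting of the facts num(1),…,num(N) together with the standard translation of: the generalized partition rule ⊕_C queen(R,C) ← num(R), num(C) (assigning to every row exactly one column), the constraint ⇐ queen(R₁,C), queen(R₂,C), R₁ ≠ R₂, and the constraints ⇐ queen(R₁,C₁), queen(R₂,C₂), R₁ ≠ R₂, R₁+C₁ = R₂+C₂ and ⇐ queen(R₁,C₁), queen(R₂,C₂), R₁ ≠ R₂, R₁−C₁ = R₂−C₂ (each constraint translated as c₀ ← Body, ¬c₀ with fresh c₀). Then the stable models of P_queen(N) are in bijection with the functions q : {1,…,N} → {1,…,N} such that q is injective and for all i ≠ j both i + q(i) ≠ j + q(j) and i − q(i) ≠ j − q(j); i.e., with the placements of N mutually non-attacking queens on an N × N chessboard, where the stable model corresponding to q contains exactly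 the atoms queen(i, q(i)). -/
/-- Atoms of the N-Queens program (`c1`, `c2`, `c3` are the fresh constraint atoms). -/
inductive QAtom where
  | num : ℕ → QAtom
  | queen : ℕ → ℕ → QAtom
  | diff : ℕ → ℕ → QAtom
  | c1 : QAtom
  | c2 : QAtom
  | c3 : QAtom

/-- The ground program `P_queen(N)`: facts `num(1),…,num(N)`, the translated generalized
partition rule `⊕_C queen(R,C) ← num(R), num(C)` and the three translated constraints. -/
def queenProgram (N : ℕ) : Set (Rule QAtom) :=
  {r | ∃ n ∈ Finset.Icc 1 N, r = Rule.fact (QAtom.num n)} ∪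
  {r | ∃ x ∈ Finset.Icc 1 N, ∃ c ∈ Finset.Icc 1 N,
      r = ⟨QAtom.queen x c, ∅, {QAtom.diff x c}⟩} ∪
  {r | ∃ x ∈ Finset.Icc 1 N, ∃ c ∈ Finset.Icc 1 N, ∃ c' ∈ Finset.Icc 1 N, c' ≠ c ∧
      r = ⟨QAtom.diff x c, {QAtom.queen x c'}, ∅⟩} ∪
  {r | ∃ r1 ∈ Finset.Icc 1 N, ∃ r2 ∈ Finset.Icc 1 N, ∃ c ∈ Finset.Icc 1 N, r1 ≠ r2 ∧
      r = ⟨QAtom.c1, {QAtom.queen r1 c, QAtom.queen r2 c}, {QAtom.c1}⟩} ∪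
  {r | ∃ r1 ∈ Finset.Icc 1 N, ∃ c1 ∈ Finset.Icc 1 N, ∃ r2 ∈ Finset.Icc 1 N,
      ∃ c2 ∈ Finset.Icc 1 N, r1 ≠ r2 ∧ r1 + c1 = r2 + c2 ∧
      r = ⟨QAtom.c2, {QAtom.queen r1 c1, QAtom.queen r2 c2}, {QAtom.c2}⟩} ∪
  {r | ∃ r1 ∈ Finset.Icc 1 N, ∃ c1 ∈ Finset.Icc 1 N, ∃ r2 ∈ Finset.Icc 1 N,
      ∃ c2 ∈ Finset.Icc 1 N, r1 ≠ r2 ∧ (r1 : ℤ) - (c1 : ℤ) = (r2 : ℤ) - (c2 : ℤ) ∧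
      r = ⟨QAtom.c3, {QAtom.queen r1 c1, QAtom.queen r2 c2}, {QAtom.c3}⟩}

/-- A stable model is closed under its own reduct. -/
theorem IsStableModel.closedUnderReduct {α : Type*} {P : Set (Rule α)} {M : Set α}
    (hM : IsStableModel P M) : ClosedUnderReduct P M M := by
  intro r hr hneg hpos
  have hsub : ∀ I, ClosedUnderReduct P M I → M ⊆ I := fun I hI a ha => by
    rw [hM] at ha
    exact ha I hI
  rw [hM]
  exact fun I hI => hI r hr hneg (hpos.trans (hsub I hI))

/-- Every atom of a stable model is supported by a rule whose body holds in the model. -/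
theorem IsStableModel.supported {α : Type*} {P : Set (Rule α)} {M : Set α}
    (hM : IsStableModel P M) {a : α} (ha : a ∈ M) :
    ∃ r ∈ P, (∀ c ∈ r.neg, c ∉ M) ∧ r.pos ⊆ M ∧ r.head = a := by
  have hclosed : ClosedUnderReduct P M
      {a | a ∈ M ∧ ∃ r ∈ P, (∀ c ∈ r.neg, c ∉ M) ∧ r.pos ⊆ M ∧ r.head = a} := by
    intro r hr hneg hpos
    have hposM : r.pos ⊆ M := fun b hb => (hpos hb).1
    exact ⟨hM.closedUnderReduct r hr hneg hposM, r, hr, hneg, hposM, rfl⟩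
  rw [hM] at ha
  exact (ha _ hclosed).2

/-- A set of atoms is a stable model if it is closed under its own reduct and contained in every
set closed under that reduct. -/
theorem isStableModel_of_closedUnderReduct {α : Type*} {P : Set (Rule α)} {M : Set α}
    (hM : ClosedUnderReduct P M M) (hmin : ∀ I, ClosedUnderReduct P M I → M ⊆ I) :
    IsStableModel P M :=
  Set.Subset.antisymm (fun _ ha I hI => hmin I hI ha) (fun _ ha => ha M hM)

/-- Closure under the reduct of the queens program, rule by rule. -/
theorem closedUnderReduct_queenProgram_iff {N : ℕ} {M I : Set QAtom} :
    ClosedUnderReduct (queenProgram N) M I ↔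
      (∀ n ∈ Finset.Icc 1 N, QAtom.num n ∈ I) ∧
      (∀ x ∈ Finset.Icc 1 N, ∀ c ∈ Finset.Icc 1 N, QAtom.diff x c ∉ M → QAtom.queen x c ∈ I) ∧
      (∀ x ∈ Finset.Icc 1 N, ∀ c ∈ Finset.Icc 1 N, ∀ c' ∈ Finset.Icc 1 N, c' ≠ c →
        QAtom.queen x c' ∈ I → QAtom.diff x c ∈ I) ∧
      (∀ r₁ ∈ Finset.Icc 1 N, ∀ r₂ ∈ Finset.Icc 1 N, ∀ c ∈ Finset.Icc 1 N, r₁ ≠ r₂ →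
        QAtom.c1 ∉ M → QAtom.queen r₁ c ∈ I → QAtom.queen r₂ c ∈ I → QAtom.c1 ∈ I) ∧
      (∀ r₁ ∈ Finset.Icc 1 N, ∀ c₁ ∈ Finset.Icc 1 N, ∀ r₂ ∈ Finset.Icc 1 N,
        ∀ c₂ ∈ Finset.Icc 1 N, r₁ ≠ r₂ → r₁ + c₁ = r₂ + c₂ →
        QAtom.c2 ∉ M → QAtom.queen r₁ c₁ ∈ I → QAtom.queen r₂ c₂ ∈ I → QAtom.c2 ∈ I) ∧
      (∀ r₁ ∈ Finset.Icc 1 N, ∀ c₁ ∈ Finset.Icc 1 N, ∀ r₂ ∈ Finset.Icc 1 N,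
        ∀ c₂ ∈ Finset.Icc 1 N, r₁ ≠ r₂ → (r₁ : ℤ) - (c₁ : ℤ) = (r₂ : ℤ) - (c₂ : ℤ) →
        QAtom.c3 ∉ M → QAtom.queen r₁ c₁ ∈ I → QAtom.queen r₂ c₂ ∈ I → QAtom.c3 ∈ I) := by
  constructor
  · intro h
    refine ⟨fun n hn => ?_, fun x hx c hc hd => ?_, fun x hx c hc c' hc' hne hq => ?_,
      fun r₁ hr₁ r₂ hr₂ c hc hne hM h₁ h₂ => ?_,
      fun r₁ hr₁ c₁ hc₁ r₂ hr₂ c₂ hc₂ hne he hM h₁ h₂ => ?_,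
      fun r₁ hr₁ c₁ hc₁ r₂ hr₂ c₂ hc₂ hne he hM h₁ h₂ => ?_⟩
    · exact h (Rule.fact (QAtom.num n))
        (Or.inl <| Or.inl <| Or.inl <| Or.inl <| Or.inl ⟨n, hn, rfl⟩)
        (by simp [Rule.fact]) (by simp [Rule.fact])
    · exact h ⟨QAtom.queen x c, ∅, {QAtom.diff x c}⟩
        (Or.inl <| Or.inl <| Or.inl <| Or.inl <| Or.inr ⟨x, hx, c, hc, rfl⟩)
        (by simpa using hd) (by simp)
    · exact h ⟨QAtom.diff x c, {QAtom.queen x c'}, ∅⟩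
        (Or.inl <| Or.inl <| Or.inl <| Or.inr ⟨x, hx, c, hc, c', hc', hne, rfl⟩)
        (by simp) (by simpa using hq)
    · exact h ⟨QAtom.c1, {QAtom.queen r₁ c, QAtom.queen r₂ c}, {QAtom.c1}⟩
        (Or.inl <| Or.inl <| Or.inr ⟨r₁, hr₁, r₂, hr₂, c, hc, hne, rfl⟩)
        (by simpa using hM) (Set.pair_subset h₁ h₂)
    · exact h ⟨QAtom.c2, {QAtom.queen r₁ c₁, QAtom.queen r₂ c₂}, {QAtom.c2}⟩
        (Or.inl <| Or.inr ⟨r₁, hr₁, c₁, hc₁, r₂, hr₂, c₂, hc₂, hne, he, rfl⟩)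
        (by simpa using hM) (Set.pair_subset h₁ h₂)
    · exact h ⟨QAtom.c3, {QAtom.queen r₁ c₁, QAtom.queen r₂ c₂}, {QAtom.c3}⟩
        (Or.inr ⟨r₁, hr₁, c₁, hc₁, r₂, hr₂, c₂, hc₂, hne, he, rfl⟩)
        (by simpa using hM) (Set.pair_subset h₁ h₂)
  · rintro ⟨hnum, hqueen, hdiff, hcol, hsum, hsub⟩ r hr hneg hpos
    rcases hr with ((((⟨n, hn, rfl⟩ | ⟨x, hx, c, hc, rfl⟩) | ⟨x, hx, c, hc, c', hc', hne, rfl⟩) |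
      ⟨r₁, hr₁, r₂, hr₂, c, hc, hne, rfl⟩) |
      ⟨r₁, hr₁, c₁, hc₁, r₂, hr₂, c₂, hc₂, hne, he, rfl⟩) |
      ⟨r₁, hr₁, c₁, hc₁, r₂, hr₂, c₂, hc₂, hne, he, rfl⟩
    · exact hnum n hn
    · exact hqueen x hx c hc (hneg _ rfl)
    · exact hdiff x hx c hc c' hc' hne (hpos rfl)
    · exact hcol r₁ hr₁ r₂ hr₂ c hc hne (hneg _ rfl) (hpos (Or.inl rfl)) (hpos (Or.inr rfl))
    · exact hsum r₁ hr₁ c₁ hc₁ r₂ hr₂ c₂ hc₂ hne he (hneg _ rfl) (hpos (Or.inl rfl))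
        (hpos (Or.inr rfl))
    · exact hsub r₁ hr₁ c₁ hc₁ r₂ hr₂ c₂ hc₂ hne he (hneg _ rfl) (hpos (Or.inl rfl))
        (hpos (Or.inr rfl))

/-- The rules that can support an atom of a stable model of the queens program; in particular
the constraint atoms are never supported. -/
theorem IsStableModel.queenProgram_supported {N : ℕ} {M : Set QAtom}
    (hM : IsStableModel (queenProgram N) M) {a : QAtom} (ha : a ∈ M) :
    (∃ n ∈ Finset.Icc 1 N, a = QAtom.num n) ∨
    (∃ x ∈ Finset.Icc 1 N, ∃ c ∈ Finset.Icc 1 N, QAtom.diff x c ∉ M ∧ a = QAtom.queen x c) ∨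
    (∃ x ∈ Finset.Icc 1 N, ∃ c ∈ Finset.Icc 1 N, ∃ c' ∈ Finset.Icc 1 N, c' ≠ c ∧
      QAtom.queen x c' ∈ M ∧ a = QAtom.diff x c) := by
  obtain ⟨r, hr, hneg, hpos, rfl⟩ := hM.supported ha
  rcases hr with ((((⟨n, hn, rfl⟩ | ⟨x, hx, c, hc, rfl⟩) | ⟨x, hx, c, hc, c', hc', hne, rfl⟩) |
    ⟨r₁, hr₁, r₂, hr₂, c, hc, hne, rfl⟩) |
    ⟨r₁, hr₁, c₁, hc₁, r₂, hr₂, c₂, hc₂, hne, he, rfl⟩) |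
    ⟨r₁, hr₁, c₁, hc₁, r₂, hr₂, c₂, hc₂, hne, he, rfl⟩
  · exact Or.inl ⟨n, hn, rfl⟩
  · exact Or.inr (Or.inl ⟨x, hx, c, hc, hneg _ rfl, rfl⟩)
  · exact Or.inr (Or.inr ⟨x, hx, c, hc, c', hc', hne, hpos rfl, rfl⟩)
  all_goals exact absurd ha (hneg _ rfl)

/-- In a stable model of the queens program every row holds exactly one queen. -/
theorem IsStableModel.existsUnique_queen {N : ℕ} (hN : 1 ≤ N) {M : Set QAtom}
    (hM : IsStableModel (queenProgram N) M) {x : ℕ} (hx : x ∈ Finset.Icc 1 N) :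
    ∃ c ∈ Finset.Icc 1 N, QAtom.queen x c ∈ M ∧
      ∀ c' ∈ Finset.Icc 1 N, QAtom.queen x c' ∈ M → c' = c := by
  obtain ⟨-, hqueen, hdiff, -⟩ := closedUnderReduct_queenProgram_iff.1 hM.closedUnderReduct
  have hone : 1 ∈ Finset.Icc 1 N := Finset.mem_Icc.2 ⟨le_rfl, hN⟩
  have hex : ∃ c ∈ Finset.Icc 1 N, QAtom.queen x c ∈ M := by
    by_cases hd : QAtom.diff x 1 ∈ M
    · rcases hM.queenProgram_supported hd with ⟨_, _, h⟩ | ⟨_, _, _, _, _, h⟩ |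
        ⟨_, _, _, _, c', hc', _, hq, h⟩
      · cases h
      · cases h
      · cases h
        exact ⟨c', hc', hq⟩
    · exact ⟨1, hone, hqueen x hx 1 hone hd⟩
  obtain ⟨c, hc, hq⟩ := hex
  refine ⟨c, hc, hq, fun c' hc' hq' => ?_⟩
  by_contra hne
  rcases hM.queenProgram_supported hq' with ⟨_, _, h⟩ | ⟨_, _, _, _, hd, h⟩ |
    ⟨_, _, _, _, _, _, _, _, h⟩
  · cases h
  · cases h
    exact hd (hdiff x hx c' hc' c hc (Ne.symm hne) hq)
  · cases h

theorem stmt11 (N : ℕ) (hN : 1 ≤ N) :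
    ∀ M : Set QAtom, IsStableModel (queenProgram N) M ↔
      ∃ q : {n : ℕ // n ∈ Finset.Icc 1 N} → {n : ℕ // n ∈ Finset.Icc 1 N},
        Function.Injective q ∧
        (∀ i j : {n : ℕ // n ∈ Finset.Icc 1 N}, i ≠ j →
          (i : ℕ) + (q i : ℕ) ≠ (j : ℕ) + (q j : ℕ) ∧
          ((i : ℕ) : ℤ) - ((q i : ℕ) : ℤ) ≠ ((j : ℕ) : ℤ) - ((q j : ℕ) : ℤ)) ∧
        M = {a | ∃ n ∈ Finset.Icc 1 N, a = QAtom.num n} ∪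
            {a | ∃ i : {n : ℕ // n ∈ Finset.Icc 1 N}, a = QAtom.queen (i : ℕ) (q i : ℕ)} ∪
            {a | ∃ (i : {n : ℕ // n ∈ Finset.Icc 1 N}) (c : ℕ), c ∈ Finset.Icc 1 N ∧
                c ≠ (q i : ℕ) ∧ a = QAtom.diff (i : ℕ) c} := by
  intro M
  constructor
  · intro hM
    obtain ⟨hnum, hqueen, hdiff, hcol, hsum, hsub⟩ :=
      closedUnderReduct_queenProgram_iff.1 hM.closedUnderReduct
    have hc1 : QAtom.c1 ∉ M := fun h => by simpa using hM.queenProgram_supported h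
    have hc2 : QAtom.c2 ∉ M := fun h => by simpa using hM.queenProgram_supported h
    have hc3 : QAtom.c3 ∉ M := fun h => by simpa using hM.queenProgram_supported h
    choose q hqmem hq hquniq using
      fun i : {n : ℕ // n ∈ Finset.Icc 1 N} => hM.existsUnique_queen hN i.2
    refine ⟨fun i => ⟨q i, hqmem i⟩, fun i j hij => ?_, fun i j hij => ⟨fun he => ?_, fun he => ?_⟩,
      ?_⟩
    · by_contra hne
      have hqij : q i = q j := congrArg Subtype.val hij
      exact hc1 (hcol i i.2 j j.2 (q i) (hqmem i) (fun h => hne (Subtype.ext h)) hc1 (hq i)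
        (hqij ▸ hq j))
    · exact hc2 (hsum i i.2 (q i) (hqmem i) j j.2 (q j) (hqmem j)
        (fun h => hij (Subtype.ext h)) he hc2 (hq i) (hq j))
    · exact hc3 (hsub i i.2 (q i) (hqmem i) j j.2 (q j) (hqmem j)
        (fun h => hij (Subtype.ext h)) he hc3 (hq i) (hq j))
    · apply Set.Subset.antisymm
      · intro a ha
        rcases hM.queenProgram_supported ha with ⟨n, hn, rfl⟩ | ⟨x, hx, c, hc, -, rfl⟩ |
          ⟨x, hx, c, hc, c', hc', hne, hqc, rfl⟩
        · exact Or.inl (Or.inl ⟨n, hn, rfl⟩)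
        · exact Or.inl (Or.inr ⟨⟨x, hx⟩, by rw [hquniq ⟨x, hx⟩ c hc ha]⟩)
        · exact Or.inr ⟨⟨x, hx⟩, c, hc, fun h => hne
            ((hquniq ⟨x, hx⟩ c' hc' hqc).trans h.symm), rfl⟩
      · rintro a ((⟨n, hn, rfl⟩ | ⟨i, rfl⟩) | ⟨i, c, hc, hne, rfl⟩)
        · exact hnum n hn
        · exact hq i
        · exact hdiff i i.2 c hc (q i) (hqmem i) (Ne.symm hne) (hq i)
  · rintro ⟨q, hinj, hdiag, hMq⟩
    have hqueen_iff : ∀ x c, QAtom.queen x c ∈ M ↔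
        ∃ i : {n : ℕ // n ∈ Finset.Icc 1 N}, x = ↑i ∧ c = ↑(q i) := by
      simp [hMq]
    have hdiff_iff : ∀ x c, QAtom.diff x c ∈ M ↔
        ∃ i : {n : ℕ // n ∈ Finset.Icc 1 N}, c ∈ Finset.Icc 1 N ∧ c ≠ ↑(q i) ∧ x = ↑i := by
      intro x c
      rw [hMq]
      constructor
      · rintro ((⟨_, _, h⟩ | ⟨_, h⟩) | ⟨i, d, hd, hne, h⟩) <;> cases h
        exact ⟨i, hd, hne, rfl⟩
      · rintro ⟨i, hc, hne, rfl⟩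
        exact Or.inr ⟨i, c, hc, hne, rfl⟩
    apply isStableModel_of_closedUnderReduct
    · refine closedUnderReduct_queenProgram_iff.2 ⟨fun n hn => ?_, fun x hx c hc hd => ?_,
        fun x hx c hc c' hc' hne hq => ?_, fun r₁ hr₁ r₂ hr₂ c hc hne _ h₁ h₂ => ?_,
        fun r₁ hr₁ c₁ hc₁ r₂ hr₂ c₂ hc₂ hne he _ h₁ h₂ => ?_,
        fun r₁ hr₁ c₁ hc₁ r₂ hr₂ c₂ hc₂ hne he _ h₁ h₂ => ?_⟩
      · rw [hMq]
        exact Or.inl (Or.inl ⟨n, hn, rfl⟩)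
      · refine (hqueen_iff x c).2 ⟨⟨x, hx⟩, rfl, ?_⟩
        by_contra hne
        exact hd ((hdiff_iff x c).2 ⟨⟨x, hx⟩, hc, hne, rfl⟩)
      · obtain ⟨i, rfl, rfl⟩ := (hqueen_iff _ _).1 hq
        exact (hdiff_iff _ _).2 ⟨i, hc, Ne.symm hne, rfl⟩
      · obtain ⟨i, rfl, rfl⟩ := (hqueen_iff _ _).1 h₁
        obtain ⟨j, rfl, hj⟩ := (hqueen_iff _ _).1 h₂
        exact absurd (congrArg Subtype.val (hinj (Subtype.ext hj))) hne
      · obtain ⟨i, rfl, rfl⟩ := (hqueen_iff _ _).1 h₁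
        obtain ⟨j, rfl, rfl⟩ := (hqueen_iff _ _).1 h₂
        exact absurd he (hdiag i j (fun h => hne (congrArg Subtype.val h))).1
      · obtain ⟨i, rfl, rfl⟩ := (hqueen_iff _ _).1 h₁
        obtain ⟨j, rfl, rfl⟩ := (hqueen_iff _ _).1 h₂
        exact absurd he (hdiag i j (fun h => hne (congrArg Subtype.val h))).2
    · intro I hI
      obtain ⟨hnum, hqueen, hdiff, -⟩ := closedUnderReduct_queenProgram_iff.1 hI
      have hqI : ∀ i : {n : ℕ // n ∈ Finset.Icc 1 N}, QAtom.queen ↑i ↑(q i) ∈ I := by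
        refine fun i => hqueen i i.2 (q i) (q i).2 fun hd => ?_
        obtain ⟨j, -, hne, hij⟩ := (hdiff_iff _ _).1 hd
        exact hne (by rw [Subtype.ext hij])
      rw [hMq]
      rintro a ((⟨n, hn, rfl⟩ | ⟨i, rfl⟩) | ⟨i, c, hc, hne, rfl⟩)
      · exact hnum n hn
      · exact hqI i
      · exact hdiff i i.2 c hc (q i) (q i).2 (Ne.symm hne) (hqI i)
end
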